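/- arXiv:2203.13353 — 5 statements merged into one kernel-verified Lean document; each statement's English description precedes it below -/
import Mathlib

section
/- Let K = ℚ(θ) be a sextic number field generated by a root θ of a monic irreducible trinomial F(x) = x^6 + a x^m + b ∈ ℤ[x] with 1 ≤ m ≤ 5. If a ≡ 0 (mod 9) and b ≡ −1 (mod 9), then 3 divides the index i(K); in particular K is not monogenic. -/
open Polynomial NumberField

/-- The index `(ℤ_K : ℤ[θ])` of the subring `ℤ[θ]` in the ring of integers of `K`. -/
noncomputable def subIndex {K : Type*} [Field K] [NumberField K] (θ : 𝓞 K) : ℕ :=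
  ((Algebra.adjoin ℤ ({θ} : Set (𝓞 K))).toSubring.toAddSubgroup).index

/-!
A ring homomorphism `𝓞 K → 𝔽₃` is determined by its value at `β` as soon as the index of `ℤ[β]` is
prime to `3`, so it suffices to find four such homomorphisms. From `θ ^ 6 ≡ 1 (mod 9)` the element
`w = (θ ^ 2 - 1) ^ 2 / 3` is integral, and a prime over `3` contains `θ ^ 2 - 1` and `w * (w + 1)`.
All four residues `θ ≡ ±1`, `w ≡ 0, -1` occur: the trace of `(w + 1 - δ) * (θ + ε)` is congruent to
`2 * ε` modulo `3`, because `Tr (θ ^ k) ≡ 0 (mod 9)` for `6 ∤ k`, so this element lies outside some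
prime over `3`. At a prime with `w ≡ -1`, the equation `3 * w = (θ ^ 2 - 1) ^ 2` forces
ramification, so the four primes contribute at least `1 + 1 + 2 + 2 = 6` to the degree and must have
residue field `𝔽₃`.
-/

section Index

theorem ringHom_ext_of_nsmul_mem_adjoin {R S : Type*} [CommRing R] [CommRing S] [IsDomain S]
    {β : R} {n : ℕ} (hn : (n : S) ≠ 0) (hmem : ∀ x, n • x ∈ Algebra.adjoin ℤ {β})
    {f g : R →+* S} (hfg : f β = g β) : f = g := by
  ext x
  have hx : f (n • x) = g (n • x) :=
    AlgHom.adjoin_le_equalizer f.toIntAlgHom g.toIntAlgHom (by simpa using hfg) (hmem x)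
  rw [map_nsmul, map_nsmul, nsmul_eq_mul, nsmul_eq_mul] at hx
  exact mul_left_cancel₀ hn hx

variable {K : Type*} [Field K] [NumberField K]

theorem subIndex_nsmul_mem_adjoin (β x : 𝓞 K) : subIndex β • x ∈ Algebra.adjoin ℤ {β} :=
  AddSubgroup.nsmul_index_mem (Algebra.adjoin ℤ {β}).toSubring.toAddSubgroup x

theorem subIndex_eq_one_of_adjoin_eq_top {β : 𝓞 K} (hβ : Algebra.adjoin ℤ {β} = ⊤) :
    subIndex β = 1 := by
  rw [subIndex, hβ]
  exact AddSubgroup.index_top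

theorem prime_dvd_subIndex_of_lt_card {p : ℕ} [Fact p.Prime] {ι : Type*} [Fintype ι]
    (hp : p < Fintype.card ι) {f : ι → 𝓞 K →+* ZMod p} (hf : Function.Injective f) (β : 𝓞 K) :
    p ∣ subIndex β := by
  obtain ⟨i, j, hij, hβ⟩ := Fintype.exists_ne_map_eq_of_card_lt (fun i ↦ f i β) (by simpa using hp)
  by_contra hdvd
  have hn : (subIndex β : ZMod p) ≠ 0 := by rwa [Ne, ZMod.natCast_eq_zero_iff]
  exact hij (hf (ringHom_ext_of_nsmul_mem_adjoin hn (subIndex_nsmul_mem_adjoin β) hβ))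

end Index

section NilpotentTrace

open scoped TensorProduct

variable {A S : Type*} [CommRing A] [CommRing S] [Algebra A S]

theorem one_tmul_eq_zero_of_mem_map {I : Ideal A} {y : S} (hy : y ∈ I.map (algebraMap A S)) :
    (1 : A ⧸ I) ⊗ₜ[A] y = 0 := by
  let φ : S →ₐ[A] (A ⧸ I) ⊗[A] S := Algebra.TensorProduct.includeRight
  have hker : I.map (algebraMap A S) ≤ RingHom.ker φ := by
    refine Ideal.map_le_iff_le_comap.2 fun a ha ↦ ?_
    rw [Ideal.mem_comap, RingHom.mem_ker, AlgHom.commutes,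
      IsScalarTower.algebraMap_apply A (A ⧸ I), Ideal.Quotient.algebraMap_eq,
      Ideal.Quotient.eq_zero_iff_mem.2 ha, map_zero]
  exact hker hy

variable [Module.Free A S] [Module.Finite A S]

theorem trace_mem_of_mem_radical_map {I : Ideal A} (hI : I.IsRadical) {z : S}
    (hz : z ∈ (I.map (algebraMap A S)).radical) : Algebra.trace A S z ∈ I := by
  have : IsReduced (A ⧸ I) := (Ideal.isRadical_iff_quotient_reduced I).1 hI
  obtain ⟨k, hk⟩ := hz
  have hnil : IsNilpotent ((1 : A ⧸ I) ⊗ₜ[A] z) :=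
    ⟨k, by rw [Algebra.TensorProduct.tmul_pow, one_pow, one_tmul_eq_zero_of_mem_map hk]⟩
  have htrace : Algebra.trace (A ⧸ I) ((A ⧸ I) ⊗[A] S) (1 ⊗ₜ z) =
      Ideal.Quotient.mk I (Algebra.trace A S z) := by
    rw [Algebra.trace_apply, ← Algebra.baseChange_lmul, LinearMap.trace_baseChange]
    rfl
  rw [← Ideal.Quotient.eq_zero_iff_mem, ← htrace]
  exact (Algebra.isNilpotent_trace_of_isNilpotent hnil).eq_zero

theorem exists_isPrime_notMem_of_trace_notMem {I : Ideal A} (hI : I.IsRadical) {z : S}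
    (hz : Algebra.trace A S z ∉ I) :
    ∃ P : Ideal S, P.IsPrime ∧ I.map (algebraMap A S) ≤ P ∧ z ∉ P := by
  contrapose! hz
  refine trace_mem_of_mem_radical_map hI ?_
  rw [Ideal.radical_eq_sInf, Submodule.mem_sInf]
  exact fun P hP ↦ hz P hP.2 hP.1

end NilpotentTrace

section PowerTrace

theorem map_mk_eq_of_C_dvd_sub {A : Type*} [CommRing A] {N : A} {F G : A[X]} (h : C N ∣ F - G) :
    F.map (Ideal.Quotient.mk (Ideal.span {N})) = G.map (Ideal.Quotient.mk (Ideal.span {N})) := by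
  obtain ⟨H, hH⟩ := h
  have hN : Ideal.Quotient.mk (Ideal.span {N}) N = 0 :=
    Ideal.Quotient.eq_zero_iff_mem.2 (Ideal.mem_span_singleton_self N)
  rw [eq_add_of_sub_eq hH, Polynomial.map_add, Polynomial.map_mul, map_C, hN, C_0, zero_mul,
    zero_add]

theorem natDegree_eq_of_C_dvd_sub {A : Type*} [CommRing A] {N : A} (hN : ¬ IsUnit N) {F G : A[X]}
    (hF : F.Monic) (hG : G.Monic) (h : C N ∣ F - G) : F.natDegree = G.natDegree := by
  have : Nontrivial (A ⧸ Ideal.span {N}) := by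
    rwa [Ideal.Quotient.nontrivial_iff, Ne, Ideal.span_singleton_eq_top]
  rw [← hF.natDegree_map (Ideal.Quotient.mk (Ideal.span {N})), map_mk_eq_of_C_dvd_sub h,
    hG.natDegree_map]

theorem X_pow_modByMonic_X_pow_sub_one {R : Type*} [CommRing R] {n : ℕ} (hn : n ≠ 0) (j : ℕ) :
    (X ^ j : R[X]) %ₘ (X ^ n - 1) = X ^ (j % n) := by
  nontriviality R
  have hmon : (X ^ n - 1 : R[X]).Monic := monic_X_pow_sub_C 1 hn
  have hdvd : (X ^ n - 1 : R[X]) ∣ X ^ j - X ^ (j % n) := by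
    obtain ⟨q, hq⟩ := sub_one_dvd_pow_sub_one (X ^ n : R[X]) (j / n)
    refine ⟨X ^ (j % n) * q, ?_⟩
    conv_lhs => enter [1]; rw [← Nat.mod_add_div j n]
    linear_combination X ^ (j % n) * hq
  rw [modByMonic_eq_of_dvd_sub hmon hdvd, modByMonic_eq_self_iff hmon, degree_X_pow, ← C_1,
    degree_X_pow_sub_C (Nat.pos_of_ne_zero hn)]
  exact_mod_cast Nat.mod_lt j (Nat.pos_of_ne_zero hn)

variable {A R S : Type*} [CommRing A] [CommRing R] [CommRing S] [Algebra R S]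

theorem trace_root_pow_eq_sum_coeff {f : R[X]} (h : IsAdjoinRootMonic S f) (k : ℕ) :
    Algebra.trace R S (h.root ^ k) =
      ∑ i ∈ Finset.range f.natDegree, (X ^ (k + i) %ₘ f).coeff i := by
  rw [Algebra.trace_eq_matrix_trace h.basis, Matrix.trace, ← Fin.sum_univ_eq_sum_range]
  refine Finset.sum_congr rfl fun i _ ↦ ?_
  rw [Matrix.diag_apply, Algebra.leftMulMatrix_eq_repr_mul, h.basis_apply, ← pow_add, h.basis_repr,
    ← h.map_X, ← map_pow, h.modByMonicHom_map]

theorem dvd_coeff_X_pow_modByMonic {F : A[X]} (hF : F.Monic) {N : A} {n : ℕ} (hn : n ≠ 0)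
    (hFN : C N ∣ F - (X ^ n - 1)) {k : ℕ} (hk : ¬ n ∣ k) (i : ℕ) :
    N ∣ (X ^ (k + i) %ₘ F).coeff i := by
  have hki : (k + i) % n ≠ i := by
    intro h
    have hmod : k + i ≡ 0 + i [MOD n] := by
      rw [zero_add, Nat.ModEq, h, Nat.mod_eq_of_lt (h ▸ Nat.mod_lt _ (Nat.pos_of_ne_zero hn))]
    exact hk ((Nat.modEq_zero_iff_dvd).1 (Nat.ModEq.add_right_cancel' i hmod))
  rw [← Ideal.mem_span_singleton, ← Ideal.Quotient.eq_zero_iff_mem, ← coeff_map,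
    map_modByMonic _ hF, map_mk_eq_of_C_dvd_sub hFN, Polynomial.map_pow, map_X, Polynomial.map_sub,
    Polynomial.map_pow, map_X, Polynomial.map_one, X_pow_modByMonic_X_pow_sub_one hn, coeff_X_pow,
    if_neg hki.symm]

theorem exists_trace_root_pow_eq [Algebra A R] {F : A[X]} (hF : F.Monic)
    {f : R[X]} (h : IsAdjoinRootMonic S f) (hf : f = F.map (algebraMap A R)) {N : A} {n : ℕ}
    (hn : n ≠ 0) (hFN : C N ∣ F - (X ^ n - 1)) {k : ℕ} (hk : ¬ n ∣ k) :
    ∃ t, N ∣ t ∧ Algebra.trace R S (h.root ^ k) = algebraMap A R t := by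
  refine ⟨∑ i ∈ Finset.range f.natDegree, (X ^ (k + i) %ₘ F).coeff i,
    Finset.dvd_sum fun i _ ↦ dvd_coeff_X_pow_modByMonic hF hn hFN hk i, ?_⟩
  rw [trace_root_pow_eq_sum_coeff, map_sum]
  refine Finset.sum_congr rfl fun i _ ↦ ?_
  rw [← coeff_map, map_modByMonic _ hF, Polynomial.map_pow, map_X, hf]

theorem finrank_ringOfIntegers_eq_natDegree_minpoly {K : Type*} [Field K] [NumberField K] {θ : 𝓞 K}
    (hgen : Algebra.adjoin ℚ {(θ : K)} = ⊤) :
    Module.finrank ℤ (𝓞 K) = (minpoly ℤ θ).natDegree := by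
  rw [RingOfIntegers.rank, (IsAdjoinRootMonic.mkOfAdjoinEqTop (.of_finite ℚ (θ : K)) hgen).finrank,
    minpoly.isIntegrallyClosed_eq_field_fractions ℚ K θ.isIntegral,
    (minpoly.monic θ.isIntegral).natDegree_map]

theorem dvd_trace_pow_of_C_dvd_minpoly_sub {K : Type*} [Field K] [NumberField K] {θ : 𝓞 K}
    (hgen : Algebra.adjoin ℚ {(θ : K)} = ⊤) {N : ℤ} {n : ℕ} (hn : n ≠ 0)
    (hθ : C N ∣ minpoly ℤ θ - (X ^ n - 1)) {k : ℕ} (hk : ¬ n ∣ k) :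
    N ∣ Algebra.trace ℤ (𝓞 K) (θ ^ k) := by
  have hmin : minpoly ℚ (θ : K) = (minpoly ℤ θ).map (algebraMap ℤ ℚ) :=
    minpoly.isIntegrallyClosed_eq_field_fractions ℚ K θ.isIntegral
  have hint : IsIntegral ℚ (θ : K) := .of_finite ℚ _
  obtain ⟨t, ht, htrace⟩ := exists_trace_root_pow_eq (minpoly.monic θ.isIntegral)
    (IsAdjoinRootMonic.mkOfAdjoinEqTop hint hgen) hmin hn hθ hk
  rw [IsAdjoinRoot.mkOfAdjoinEqTop_root hint hgen, eq_intCast] at htrace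
  have hcast : Algebra.trace ℤ (𝓞 K) (θ ^ k) = t := by
    exact_mod_cast (Algebra.coe_trace_int (θ ^ k)).trans ((congrArg _ (by simp)).trans htrace)
  rwa [hcast]

end PowerTrace

section ResidueDegree

theorem prime_dvd_of_intCast_mem {R : Type*} [CommRing R] {p : ℕ} (hp : p.Prime) {P : Ideal R}
    (hP : P ≠ ⊤) (hpP : (p : R) ∈ P) {n : ℤ} (hn : (n : R) ∈ P) : (p : ℤ) ∣ n := by
  by_contra hdvd
  obtain ⟨u, v, huv⟩ := (Nat.prime_iff_prime_int.1 hp).irreducible.coprime_iff_not_dvd.2 hdvd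
  refine hP ((Ideal.eq_top_iff_one P).2 ?_)
  have h1 : (u : R) * p + v * n = 1 := by exact_mod_cast congrArg (Int.cast : ℤ → R) huv
  exact h1 ▸ P.add_mem (P.mul_mem_left _ hpP) (P.mul_mem_left _ hn)

theorem exists_ringHom_ker_eq_of_card_quotient {R : Type*} [CommRing R] {P : Ideal R} {p : ℕ}
    (hp : p.Prime) (hP : Nat.card (R ⧸ P) = p) : ∃ f : R →+* ZMod p, RingHom.ker f = P := by
  have : Finite (R ⧸ P) := Nat.finite_of_card_ne_zero (hP ▸ hp.ne_zero)
  have := Fintype.ofFinite (R ⧸ P)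
  have hcard : Fintype.card (R ⧸ P) = p := by rw [← Nat.card_eq_fintype_card, hP]
  let e := ZMod.ringEquivOfPrime (R ⧸ P) hp hcard
  exact ⟨(e.symm : R ⧸ P →+* ZMod p).comp (Ideal.Quotient.mk P), by
    rw [RingHom.ker_comp_of_injective _ e.symm.injective, Ideal.mk_ker]⟩

variable {R : Type*} [CommRing R] [IsDedekindDomain R] [Module.Free ℤ R] [Module.Finite ℤ R]

theorem exists_absNorm_eq_prime_pow {p : ℕ} (hp : p.Prime) {P : Ideal R} (hP : P.IsMaximal)
    (hpP : (p : R) ∈ P) : ∃ f, 0 < f ∧ P.absNorm = p ^ f := by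
  obtain ⟨q, f, hf, hqP, hq, hnorm⟩ := P.exists_prime_and_absNorm_eq_pow
  have hpq : (p : ℤ) ∣ q := prime_dvd_of_intCast_mem hp hP.ne_top hpP (by exact_mod_cast hqP)
  exact ⟨f, hf, (Nat.prime_dvd_prime_iff_eq hp hq).1 (Int.natCast_dvd_natCast.1 hpq) ▸ hnorm⟩

theorem absNorm_eq_of_finrank_le_sum {ι : Type*} [Fintype ι] {p : ℕ} (hp : p.Prime)
    {P : ι → Ideal R} (hmax : ∀ i, (P i).IsMaximal) (hinj : Function.Injective P) {e : ι → ℕ}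
    (he : ∀ i, e i ≠ 0) (hmem : ∀ i, (p : R) ∈ P i ^ e i)
    (hsum : Module.finrank ℤ R ≤ ∑ i, e i) (i : ι) : (P i).absNorm = p := by
  choose f hf hnorm using fun i ↦
    exists_absNorm_eq_prime_pow hp (hmax i) (Ideal.pow_le_self (he i) (hmem i))
  have hdvd : ∏ i, P i ^ e i ∣ Ideal.span {(p : R)} := by
    refine Fintype.prod_dvd_of_coprime (fun i j hij ↦ ?_)
      fun i ↦ Ideal.dvd_span_singleton.2 (hmem i)
    exact (Ideal.isCoprime_of_isMaximal (hinj.ne hij)).pow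
  have hpow : p ^ ∑ i, f i * e i ∣ p ^ Module.finrank ℤ R := by
    simpa only [map_prod, map_pow, hnorm, ← pow_mul, Finset.prod_pow_eq_pow_sum,
      Ideal.absNorm_span_natCast] using map_dvd Ideal.absNorm hdvd
  have hle : ∑ i, f i * e i ≤ ∑ i, e i :=
    ((Nat.pow_dvd_pow_iff_le_right hp.one_lt).1 hpow).trans hsum
  have hge : ∀ i ∈ Finset.univ, e i ≤ f i * e i := fun i _ ↦ Nat.le_mul_of_pos_left _ (hf i)
  have heq : e i = f i * e i :=
    (Finset.sum_eq_sum_iff_of_le hge).1 ((Finset.sum_le_sum hge).antisymm hle) i (Finset.mem_univ i)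
  rw [hnorm, (Nat.mul_eq_right (he i)).1 heq.symm, pow_one]

end ResidueDegree

section SexticModNine

variable {R : Type*} [CommRing R] {θ w A : R}

theorem three_dvd_sq_sub_one_sq [IsDomain R] [IsIntegrallyClosed R] (hθ : θ ^ 6 = 1 - 9 * A) :
    3 ∣ (θ ^ 2 - 1) ^ 2 := by
  have hsq : ((θ ^ 2 - 1) ^ 2 - 3) ^ 2 = 3 ^ 2 * (θ ^ 2 + 4 * A - θ ^ 2 * A) := by
    linear_combination (θ ^ 2 - 4) * hθ
  have hdvd : (3 : R) ∣ (θ ^ 2 - 1) ^ 2 - 3 :=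
    (IsIntegrallyClosed.pow_dvd_pow_iff two_ne_zero).1 ⟨_, hsq⟩
  exact dvd_sub_self_right.1 hdvd

theorem mul_add_one_eq_of_three_mul_eq_sq [IsDomain R] [CharZero R] (hθ : θ ^ 6 = 1 - 9 * A)
    (hw : 3 * w = (θ ^ 2 - 1) ^ 2) :
    w * (w + 1) = 3 * (w + A) + (θ ^ 2 - 1) * (1 - A) := by
  have h9 : (9 : R) ≠ 0 := by norm_num
  refine mul_left_cancel₀ h9 ?_
  linear_combination (3 * w + (θ ^ 2 - 1) ^ 2 - 6) * hw + (θ ^ 2 - 4) * hθ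

theorem three_dvd_trace_mul_sub [Module.Free ℤ R] (hdeg : Module.finrank ℤ R = 6)
    (htrace : ∀ k, ¬ 6 ∣ k → 9 ∣ Algebra.trace ℤ R (θ ^ k))
    (hw : 3 * w = (θ ^ 2 - 1) ^ 2) (ε c : ℤ) :
    3 ∣ Algebra.trace ℤ R ((w + c) * (θ + ε)) - 2 * ε := by
  have hexpand : (3 : ℤ) • ((w + c) * (θ + ε)) = θ ^ 5 + ε • θ ^ 4 - (2 : ℤ) • θ ^ 3 -
      (2 * ε) • θ ^ 2 + (1 + 3 * c) • θ ^ 1 + (ε * (1 + 3 * c)) • 1 := by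
    simp only [zsmul_eq_mul]
    push_cast
    linear_combination (θ + ε) * hw
  have hone : Algebra.trace ℤ R 1 = 6 := by
    simpa [hdeg] using Algebra.trace_algebraMap (S := R) (1 : ℤ)
  have htr := congrArg (Algebra.trace ℤ R) hexpand
  simp only [map_add, map_sub, map_smul, smul_eq_mul, hone] at htr
  obtain ⟨t₁, h₁⟩ := htrace 1 (by decide)
  obtain ⟨t₂, h₂⟩ := htrace 2 (by decide)
  obtain ⟨t₃, h₃⟩ := htrace 3 (by decide)
  obtain ⟨t₄, h₄⟩ := htrace 4 (by decide)
  obtain ⟨t₅, h₅⟩ := htrace 5 (by decide)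
  rw [h₁, h₂, h₃, h₄, h₅] at htr
  refine ⟨t₅ + ε * t₄ - 2 * t₃ - 2 * ε * t₂ + (1 + 3 * c) * t₁ + 2 * ε * c, ?_⟩
  linarith

theorem sq_sub_one_eq_mul_units (θ : R) (ε : ℤˣ) :
    θ ^ 2 - 1 = (θ - ((ε : ℤ) : R)) * (θ + ((ε : ℤ) : R)) := by
  have hε : ((ε : ℤ) : R) ^ 2 = 1 := by
    rw [← Int.cast_pow, ← Units.val_pow_eq_pow_val, Int.units_sq, Units.val_one, Int.cast_one]
  linear_combination hε

theorem mul_add_one_eq (w : R) (δ : Fin 2) :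
    w * (w + 1) = (w + ((δ : ℤ) : R)) * (w + ((1 - δ : ℤ) : R)) := by
  fin_cases δ <;> simp [mul_comm]

/-- `P` is a prime over `3` at which `θ ≡ i.1` and `w ≡ -i.2`; for `θ ^ 6 ≡ 1 (mod 9)` and
`3 * w = (θ ^ 2 - 1) ^ 2` every prime over `3` is of this kind for exactly one label `i`. -/
structure IsPrimeOverThreeAt (θ w : R) (i : ℤˣ × Fin 2) (P : Ideal R) : Prop where
  isPrime : P.IsPrime
  three_mem : 3 ∈ P
  sub_mem : θ - ((i.1 : ℤ) : R) ∈ P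
  add_mem : w + ((i.2 : ℤ) : R) ∈ P

namespace IsPrimeOverThreeAt

variable {P : Ideal R} {i j : ℤˣ × Fin 2}

theorem sq_sub_one_mem (h : IsPrimeOverThreeAt θ w i P) : θ ^ 2 - 1 ∈ P := by
  rw [sq_sub_one_eq_mul_units θ i.1]
  exact P.mul_mem_right _ h.sub_mem

theorem three_mem_pow (h : IsPrimeOverThreeAt θ w i P) (hw : 3 * w = (θ ^ 2 - 1) ^ 2) :
    3 ∈ P ^ ((i.2 : ℕ) + 1) := by
  obtain ⟨ε, δ⟩ := i
  match δ with
  | 0 => simpa using h.three_mem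
  | 1 =>
    have hadd : w + 1 ∈ P := by simpa using h.add_mem
    rw [show (3 : R) = 3 * (w + 1) - (θ ^ 2 - 1) ^ 2 by linear_combination -hw]
    refine Ideal.sub_mem _ ?_ (Ideal.pow_mem_pow h.sq_sub_one_mem 2)
    exact (pow_two P).symm ▸ Ideal.mul_mem_mul h.three_mem hadd

theorem label_unique (hi : IsPrimeOverThreeAt θ w i P) (hj : IsPrimeOverThreeAt θ w j P) :
    i = j := by
  have hdvd {n : ℤ} (hn : (n : R) ∈ P) : 3 ∣ n :=
    prime_dvd_of_intCast_mem Nat.prime_three hi.isPrime.ne_top hi.three_mem hn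
  have hlabel : ∀ i j : ℤˣ × Fin 2, 3 ∣ (j.1 : ℤ) - i.1 → 3 ∣ (i.2 : ℤ) - j.2 → i = j := by
    decide
  exact hlabel i j (hdvd (by simpa using P.sub_mem hi.sub_mem hj.sub_mem))
    (hdvd (by simpa using P.sub_mem hi.add_mem hj.add_mem))

theorem of_notMem (hP : P.IsPrime) (h3 : 3 ∈ P) (hsq : θ ^ 2 - 1 ∈ P) (hmul : w * (w + 1) ∈ P)
    (hz : (w + ((1 - i.2 : ℤ) : R)) * (θ + ((i.1 : ℤ) : R)) ∉ P) :
    IsPrimeOverThreeAt θ w i P where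
  isPrime := hP
  three_mem := h3
  sub_mem := (hP.mem_or_mem (sq_sub_one_eq_mul_units θ i.1 ▸ hsq)).resolve_right
    fun h ↦ hz (P.mul_mem_left _ h)
  add_mem := (hP.mem_or_mem (mul_add_one_eq w i.2 ▸ hmul)).resolve_right
    fun h ↦ hz (P.mul_mem_right _ h)

end IsPrimeOverThreeAt

theorem exists_isPrimeOverThreeAt [IsDomain R] [CharZero R] [Module.Free ℤ R] [Module.Finite ℤ R]
    (hdeg : Module.finrank ℤ R = 6) (htrace : ∀ k, ¬ 6 ∣ k → 9 ∣ Algebra.trace ℤ R (θ ^ k))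
    (hθ : θ ^ 6 = 1 - 9 * A) (hw : 3 * w = (θ ^ 2 - 1) ^ 2) (i : ℤˣ × Fin 2) :
    ∃ P, IsPrimeOverThreeAt θ w i P := by
  have hrad : (Ideal.span {(3 : ℤ)}).IsRadical :=
    ((Ideal.span_singleton_prime three_ne_zero).2 Int.prime_three).isRadical
  have hnot : Algebra.trace ℤ R ((w + ((1 - i.2 : ℤ) : R)) * (θ + ((i.1 : ℤ) : R))) ∉
      Ideal.span {(3 : ℤ)} := by
    rw [Ideal.mem_span_singleton]
    intro hdvd
    have h2 : 3 ∣ 2 * (i.1 : ℤ) :=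
      (dvd_sub_right hdvd).1 (three_dvd_trace_mul_sub hdeg htrace hw i.1 (1 - i.2))
    rcases Int.units_eq_one_or i.1 with h | h <;> rw [h] at h2 <;> revert h2 <;> decide
  obtain ⟨P, hP, hle, hz⟩ := exists_isPrime_notMem_of_trace_notMem hrad hnot
  have h3 : (3 : R) ∈ P := by
    simpa using hle (Ideal.mem_map_of_mem _ (Ideal.mem_span_singleton_self 3))
  have hsq : θ ^ 2 - 1 ∈ P := hP.mem_of_pow_mem 2 (hw ▸ P.mul_mem_right w h3)
  have hmul : w * (w + 1) ∈ P := by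
    rw [mul_add_one_eq_of_three_mul_eq_sq hθ hw]
    exact P.add_mem (P.mul_mem_right _ h3) (P.mul_mem_right _ hsq)
  exact ⟨P, .of_notMem hP h3 hsq hmul hz⟩

theorem exists_injective_ringHom_zmod_three [IsDedekindDomain R] [CharZero R] [Module.Free ℤ R]
    [Module.Finite ℤ R] (hdeg : Module.finrank ℤ R = 6)
    (htrace : ∀ k, ¬ 6 ∣ k → 9 ∣ Algebra.trace ℤ R (θ ^ k)) (hθ : θ ^ 6 = 1 - 9 * A) :
    ∃ f : ℤˣ × Fin 2 → R →+* ZMod 3, Function.Injective f := by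
  obtain ⟨w, hw⟩ := three_dvd_sq_sub_one_sq hθ
  choose P hP using exists_isPrimeOverThreeAt hdeg htrace hθ hw.symm
  have hinj : Function.Injective P := fun i j hij ↦ (hP i).label_unique (hij ▸ hP j)
  have hmax (i) : (P i).IsMaximal :=
    (hP i).isPrime.isMaximal fun h ↦ three_ne_zero (by simpa [h] using (hP i).three_mem)
  have hcard (i) : (P i).absNorm = 3 :=
    absNorm_eq_of_finrank_le_sum (e := fun i ↦ (i.2 : ℕ) + 1) Nat.prime_three hmax hinj
      (fun _ ↦ Nat.succ_ne_zero _) (fun i ↦ (hP i).three_mem_pow hw.symm)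
      (by rw [hdeg]; decide) i
  choose f hf using fun i ↦ exists_ringHom_ker_eq_of_card_quotient Nat.prime_three (hcard i)
  exact ⟨f, fun i j hij ↦ hinj (by rw [← hf i, ← hf j, hij])⟩

end SexticModNine

section Trinomial

theorem monic_X_pow_add_C_mul_X_pow_add_C {R : Type*} [Semiring R] {m n : ℕ} (hmn : m < n)
    (a b : R) : (X ^ n + C a * X ^ m + C b).Monic := by
  nontriviality R
  rw [add_assoc]
  refine monic_X_pow_add ((degree_add_le _ _).trans_lt (max_lt ?_ ?_))
  · exact (degree_C_mul_X_pow_le m a).trans_lt (by exact_mod_cast hmn)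
  · exact degree_C_le.trans_lt (by exact_mod_cast (Nat.zero_le m).trans_lt hmn)

theorem C_dvd_trinomial_sub {N a b : ℤ} (ha : a ≡ 0 [ZMOD N]) (hb : b ≡ -1 [ZMOD N]) (m n : ℕ) :
    C N ∣ X ^ n + C a * X ^ m + C b - (X ^ n - 1) := by
  obtain ⟨a', rfl⟩ := Int.modEq_zero_iff_dvd.1 ha
  obtain ⟨b', hb'⟩ := hb.symm.dvd
  refine ⟨C a' * X ^ m + C b', ?_⟩
  rw [eq_add_of_sub_eq hb']
  simp only [C_mul, C_add, C_neg, C_1]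
  ring

theorem minpoly_eq_of_irreducible_of_monic {R S : Type*} [CommRing R] [IsDomain R]
    [IsIntegrallyClosed R] [CommRing S] [IsDomain S] [Algebra R S] [Module.IsTorsionFree R S]
    {s : S} {F : R[X]} (hirr : Irreducible F) (hmon : F.Monic) (hroot : aeval s F = 0) :
    minpoly R s = F := by
  have hs : IsIntegral R s := ⟨F, hmon, hroot⟩
  exact eq_of_monic_of_associated (minpoly.monic hs) hmon
    ((minpoly.irreducible hs).associated_of_dvd hirr (minpoly.isIntegrallyClosed_dvd hs hroot))

end Trinomial

theorem three_divides_index_of_sextic_general {K : Type*} [Field K] [NumberField K] (θ : 𝓞 K)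
    (hgen : Algebra.adjoin ℚ {(θ : K)} = ⊤) (hθ : C 9 ∣ minpoly ℤ θ - (X ^ 6 - 1)) :
    (∀ θ' : 𝓞 K, Algebra.adjoin ℚ {(θ' : K)} = ⊤ → 3 ∣ subIndex θ') ∧
      ¬ ∃ β : 𝓞 K, Algebra.adjoin ℤ ({β} : Set (𝓞 K)) = ⊤ := by
  have hdeg : Module.finrank ℤ (𝓞 K) = 6 := by
    rw [finrank_ringOfIntegers_eq_natDegree_minpoly hgen, natDegree_eq_of_C_dvd_sub (by decide)
      (minpoly.monic θ.isIntegral) (monic_X_pow_sub_C 1 (by decide)) hθ,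
      natDegree_X_pow_sub_C]
  obtain ⟨A, hA⟩ : ∃ A, θ ^ 6 = 1 - 9 * A := by
    obtain ⟨H, hH⟩ := hθ
    have heval : 1 - θ ^ 6 = 9 * aeval θ H := by
      simpa [map_ofNat] using congrArg (aeval θ) hH
    exact ⟨aeval θ H, by linear_combination -heval⟩
  obtain ⟨f, hf⟩ := exists_injective_ringHom_zmod_three hdeg
    (fun _ ↦ dvd_trace_pow_of_C_dvd_minpoly_sub hgen (by decide) hθ) hA
  have hdvd (β : 𝓞 K) : 3 ∣ subIndex β := prime_dvd_subIndex_of_lt_card (by decide) hf β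
  refine ⟨fun θ' _ ↦ hdvd θ', fun ⟨β, hβ⟩ ↦ ?_⟩
  have h1 := hdvd β
  rw [subIndex_eq_one_of_adjoin_eq_top hβ] at h1
  exact absurd h1 (by decide)

/-- If `K` is a sextic field generated by a root of an irreducible trinomial
`x^6 + a x^m + b` with `a ≡ 0 (mod 9)` and `b ≡ -1 (mod 9)`, then `3` divides
`i(K)`; in particular `K` is not monogenic. -/
theorem three_divides_index_of_sextic
    {K : Type*} [Field K] [NumberField K] (θ : 𝓞 K)
    (m : ℕ) (hm : 1 ≤ m) (hm5 : m ≤ 5)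
    (a b : ℤ)
    (F : ℤ[X]) (hF : F = X ^ 6 + C a * X ^ m + C b)
    (hirr : Irreducible F)
    (hroot : Polynomial.aeval (θ : K) F = 0)
    (hgen : Algebra.adjoin ℚ {(θ : K)} = ⊤)
    (ha : a ≡ 0 [ZMOD 9])
    (hb : b ≡ -1 [ZMOD 9]) :
    (∀ θ' : 𝓞 K, Algebra.adjoin ℚ {(θ' : K)} = ⊤ → 3 ∣ subIndex θ') ∧
      ¬ ∃ β : 𝓞 K, Algebra.adjoin ℤ ({β} : Set (𝓞 K)) = ⊤ := by
  have hmon : F.Monic := hF ▸ monic_X_pow_add_C_mul_X_pow_add_C (Nat.lt_succ_of_le hm5) a b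
  have hmin : minpoly ℤ θ = F :=
    (RingOfIntegers.minpoly_coe θ).symm.trans (minpoly_eq_of_irreducible_of_monic hirr hmon hroot)
  have hdvd : C 9 ∣ minpoly ℤ θ - (X ^ 6 - 1) := by
    rw [hmin, hF]
    exact C_dvd_trinomial_sub ha hb m 6
  exact three_divides_index_of_sextic_general θ hgen hdvd
end

section
/- Let K = ℚ(θ) be a sextic number field generated by a root θ of a monic irreducible trinomial F(x) = x^6 + a x^m + b ∈ ℤ[x] with 1 ≤ m ≤ 5. If a ≡ 0 (mod 8) and b ≡ −1 (mod 4), then 2 divides the index i(K); in particular K is not monogenic. -/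
open Polynomial NumberField

/-!
Every `x` in the ring of integers `O` satisfies `x ^ 4 ≡ x` modulo `2`. Indeed `θ ^ 6 = 1 + 4 c`
with `c ∈ ℤ[θ]`, so that `α = (θ ^ 3 + 1) / 2` is a root of `X ^ 2 - X - c`, and the congruence
holds on `R = ℤ[θ, α]` because it holds for the two generators. Hence `R / 2R` is reduced, which
forces `[O : R]` to be odd, and the congruence passes from `R` to `O`.

If `ℤ[θ']` had odd index, then `O / 2O` would be `𝔽₂[X]` modulo the reduction of the minimal
polynomial of `θ'`, which has degree `6` and would divide `X ^ 4 - X`.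
-/

section FrobeniusFixed

/-- The subring of those `x : A` with `x ^ p ^ n ≡ x` modulo `p`, that is, the preimage of the
fixed points of the `n`-th iterate of the Frobenius endomorphism of `A ⧸ pA`. Written with
divisibility in `A`, so that `A ⧸ pA` may be trivial. -/
def frobeniusFixed (A : Type*) [CommRing A] (p n : ℕ) [hp : Fact p.Prime] : Subring A where
  carrier := {x | (p : A) ∣ x ^ p ^ n - x}
  mul_mem' {x y} hx hy := by
    change (p : A) ∣ (x * y) ^ p ^ n - x * y
    have h : (x * y) ^ p ^ n - x * y = x ^ p ^ n * (y ^ p ^ n - y) + y * (x ^ p ^ n - x) := by ring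
    exact h ▸ dvd_add (hy.mul_left _) (hx.mul_left _)
  one_mem' := by simp
  add_mem' {x y} hx hy := by
    change (p : A) ∣ (x + y) ^ p ^ n - (x + y)
    obtain ⟨r, hr⟩ := exists_add_pow_prime_pow_eq hp.out x y n
    have h : (x + y) ^ p ^ n - (x + y) = x ^ p ^ n - x + (y ^ p ^ n - y) + p * (x * y * r) := by
      rw [hr]; ring
    exact h ▸ dvd_add (dvd_add hx hy) (dvd_mul_right _ _)
  zero_mem' := by simp [hp.out.ne_zero]
  neg_mem' {x} hx := by
    change (p : A) ∣ (-x) ^ p ^ n - -x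
    obtain ⟨r, hr⟩ := exists_add_pow_prime_pow_eq hp.out x (-x) n
    have h : (-x) ^ p ^ n - -x = p * (x * x * r) - (x ^ p ^ n - x) := by
      rw [add_neg_cancel, zero_pow (pow_ne_zero n hp.out.ne_zero)] at hr
      linear_combination -hr
    exact h ▸ dvd_sub (dvd_mul_right _ _) hx

variable {A : Type*} [CommRing A] {p n : ℕ} [hp : Fact p.Prime]

theorem mem_frobeniusFixed {x : A} : x ∈ frobeniusFixed A p n ↔ (p : A) ∣ x ^ p ^ n - x :=
  Iff.rfl

theorem frobeniusFixed_adjoin_eq_top {s : Set A}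
    (hs : ∀ x : Algebra.adjoin ℤ s, (x : A) ∈ s → x ∈ frobeniusFixed (Algebra.adjoin ℤ s) p n) :
    frobeniusFixed (Algebra.adjoin ℤ s) p n = ⊤ := by
  have hle : ⊤ ≤ subalgebraOfSubring (frobeniusFixed (Algebra.adjoin ℤ s) p n) :=
    Algebra.adjoin_adjoin_coe_preimage.ge.trans (Algebra.adjoin_le hs)
  exact eq_top_iff.2 fun x _ ↦ hle (Algebra.mem_top (x := x))

theorem dvd_of_dvd_pow_of_frobeniusFixed_eq_top (h : frobeniusFixed A p n = ⊤) {x : A}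
    (hx : (p : A) ∣ x ^ p ^ n) : (p : A) ∣ x :=
  (dvd_sub_right hx).1 (mem_frobeniusFixed.1 (h ▸ Subring.mem_top x))

variable {R : Subalgebra ℤ A}

theorem natCast_mul_mem_of_frobeniusFixed_eq_top (hn : n ≠ 0)
    (hp0 : IsLeftRegular (p : A)) (hR : frobeniusFixed R p n = ⊤) {d : ℕ}
    (hd : ∀ x : A, ((p * d : ℕ) : A) * x ∈ R) (x : A) : (d : A) * x ∈ R := by
  -- As `p d A ⊆ R`, every power of `z = p d x` from the second on lies in `pR`, and `R / pR` is
  -- reduced.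
  obtain ⟨k, hk⟩ := Nat.exists_eq_add_of_le' (Nat.one_lt_pow hn hp.out.one_lt)
  let z : R := ⟨((p * d : ℕ) : A) * x, hd x⟩
  let w : R := ⟨((p * d : ℕ) : A) * (d * (p * d) ^ k * x ^ (k + 2)), hd _⟩
  have hzw : z ^ p ^ n = p * w := Subtype.ext <| by
    simp only [z, w, hk, SubmonoidClass.mk_pow, MulMemClass.coe_mul, SubringClass.coe_natCast]
    push_cast
    ring
  obtain ⟨r, hr⟩ : (p : R) ∣ z :=
    dvd_of_dvd_pow_of_frobeniusFixed_eq_top hR ⟨w, hzw⟩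
  have hdx : (d : A) * x = r := hp0 <| by
    simpa [z, mul_assoc] using congrArg Subtype.val hr
  exact hdx ▸ r.2

theorem exists_natCast_mul_mem_not_dvd (hn : n ≠ 0)
    (hp0 : IsLeftRegular (p : A)) (hR : frobeniusFixed R p n = ⊤) {d : ℕ} (hd0 : d ≠ 0)
    (hd : ∀ x : A, (d : A) * x ∈ R) : ∃ e : ℕ, ¬ p ∣ e ∧ ∀ x : A, (e : A) * x ∈ R := by
  obtain ⟨k, e, he, rfl⟩ := Nat.exists_eq_pow_mul_and_not_dvd hd0 p hp.out.ne_one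
  clear hd0
  refine ⟨e, he, ?_⟩
  induction k with
  | zero => simpa using hd
  | succ k ih =>
    refine ih (natCast_mul_mem_of_frobeniusFixed_eq_top hn hp0 hR ?_)
    simpa [pow_succ', mul_assoc] using hd

theorem frobeniusFixed_eq_top_of_subalgebra (hn : n ≠ 0)
    (hp0 : IsLeftRegular (p : A)) (hR : frobeniusFixed R p n = ⊤) {d : ℕ} (hd0 : d ≠ 0)
    (hd : ∀ x : A, (d : A) * x ∈ R) : frobeniusFixed A p n = ⊤ := by
  obtain ⟨e, hpe, he⟩ := exists_natCast_mul_mem_not_dvd hn hp0 hR hd0 hd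
  refine eq_top_iff.2 fun x _ ↦ ?_
  have hex : (p : A) ∣ ((e : A) * x) ^ p ^ n - e * x := by
    have : (⟨e * x, he x⟩ : R) ∈ frobeniusFixed R p n := hR ▸ Subring.mem_top _
    simpa using map_dvd R.val (mem_frobeniusFixed.1 this)
  have he' : (p : A) ∣ (e : A) ^ p ^ n - e := mem_frobeniusFixed.1 (natCast_mem _ e)
  have h : (e : A) * (x ^ p ^ n - x) =
      ((e : A) * x) ^ p ^ n - e * x - ((e : A) ^ p ^ n - e) * x ^ p ^ n := by ring
  have hcop : IsCoprime (p : A) (e : A) := ((Nat.Prime.coprime_iff_not_dvd hp.out).2 hpe).cast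
  exact hcop.dvd_of_dvd_mul_left (h ▸ dvd_sub hex (he'.mul_right _))

end FrobeniusFixed

section Index

open RingOfIntegers

variable {K : Type*} [Field K] {θ : 𝓞 K}

theorem natCast_exponent_mul_mem_adjoin (x : 𝓞 K) :
    (exponent θ : 𝓞 K) * x ∈ Algebra.adjoin ℤ {θ} :=
  mem_conductor_iff.1 (Int.absNorm_under_mem (conductor ℤ θ)) x

variable [NumberField K]

theorem natDegree_minpoly_eq_finrank (hθ : Algebra.adjoin ℚ {(θ : K)} = ⊤) :
    (minpoly ℤ θ).natDegree = Module.finrank ℚ K := by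
  have hprim : IntermediateField.adjoin ℚ {(θ : K)} = ⊤ :=
    (IntermediateField.adjoin_eq_top_iff_of_isAlgebraic
      fun x _ ↦ Algebra.IsAlgebraic.isAlgebraic x).2 hθ
  rw [← (Field.primitive_element_iff_minpoly_natDegree_eq ℚ (θ : K)).1 hprim,
    minpoly.isIntegrallyClosed_eq_field_fractions ℚ K θ.isIntegral,
    (minpoly.monic θ.isIntegral).natDegree_map]

theorem finrank_eq_natDegree_of_irreducible {F : ℤ[X]} (hmonic : F.Monic) (hirr : Irreducible F)
    (hroot : aeval θ F = 0) (hθ : Algebra.adjoin ℚ {(θ : K)} = ⊤) :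
    Module.finrank ℚ K = F.natDegree := by
  have hassoc : Associated (minpoly ℤ θ) F :=
    (minpoly.irreducible θ.isIntegral).associated_of_dvd hirr
      (minpoly.isIntegrallyClosed_dvd θ.isIntegral hroot)
  rw [← natDegree_minpoly_eq_finrank hθ,
    eq_of_monic_of_associated (minpoly.monic θ.isIntegral) hmonic hassoc]

theorem exponent_ne_zero_of_adjoin_eq_top (hθ : Algebra.adjoin ℚ {(θ : K)} = ⊤) :
    exponent θ ≠ 0 := by
  have hsep : aeval θ (derivative (minpoly ℤ θ)) ≠ 0 := by
    rw [← (FaithfulSMul.algebraMap_injective (𝓞 K) K).ne_iff, map_zero, ← aeval_algebraMap_apply,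
      ← aeval_map_algebraMap ℚ, ← derivative_map,
      ← minpoly.isIntegrallyClosed_eq_field_fractions ℚ K θ.isIntegral]
    exact (Algebra.IsSeparable.isSeparable ℚ (θ : K)).aeval_derivative_ne_zero (minpoly.aeval _ _)
  have hcond : conductor ℤ θ ≠ ⊥ := fun h ↦ hsep <| by
    rw [← Ideal.span_singleton_eq_bot, ← conductor_mul_differentIdeal ℤ ℚ K θ hθ, h, Ideal.bot_mul]
  exact Ideal.absNorm_eq_zero_iff.not.2 (Ideal.under_ne_bot ℤ hcond)

theorem exponent_dvd_subIndex : exponent θ ∣ subIndex θ := by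
  have hmem : ((subIndex θ : ℤ) : 𝓞 K) ∈ conductor ℤ θ := mem_conductor_iff.2 fun x ↦ by
    simpa using! AddSubgroup.nsmul_index_mem
      (Algebra.adjoin ℤ ({θ} : Set (𝓞 K))).toSubring.toAddSubgroup x
  exact Int.natCast_dvd_natCast.1 (Int.cast_mem_ideal_iff.1 hmem)

theorem adjoin_rat_eq_top_of_adjoin_int_eq_top (h : Algebra.adjoin ℤ {θ} = ⊤) :
    Algebra.adjoin ℚ {(θ : K)} = ⊤ := by
  have hle : Algebra.adjoin ℤ {θ} ≤
      ((Algebra.adjoin ℚ {(θ : K)}).restrictScalars ℤ).comap (IsScalarTower.toAlgHom ℤ (𝓞 K) K) :=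
    Algebra.adjoin_le (Set.singleton_subset_iff.2 (Algebra.self_mem_adjoin_singleton ℚ (θ : K)))
  refine eq_top_iff.2 fun x _ ↦ ?_
  obtain ⟨d, hd0, hd⟩ := exists_integral_multiples ℤ ℚ {x}
  have hdx : d • x ∈ Algebra.adjoin ℚ {(θ : K)} :=
    hle (h ▸ Algebra.mem_top (x := (⟨d • x, hd x (Finset.mem_singleton_self x)⟩ : 𝓞 K)))
  have hx : x = (d : ℚ)⁻¹ • d • x := by
    rw [← Int.cast_smul_eq_zsmul ℚ d x, inv_smul_smul₀ (Int.cast_ne_zero.2 hd0)]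
  exact hx ▸ Subalgebra.smul_mem _ hdx _

variable {p n : ℕ} [hp : Fact p.Prime]

theorem dvd_exponent_of_frobeniusFixed_eq_top (hn : n ≠ 0)
    (h : frobeniusFixed (𝓞 K) p n = ⊤) (hdeg : p ^ n < Module.finrank ℚ K)
    (hθ : Algebra.adjoin ℚ {(θ : K)} = ⊤) : p ∣ exponent θ := by
  by_contra hpe
  have hdvd : (minpoly ℤ θ).map (Int.castRingHom (ZMod p)) ∣ X ^ p ^ n - X := by
    rw [← Ideal.mem_span_singleton, ← Ideal.Quotient.eq_zero_iff_mem,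
      ← (ZModXQuotSpanEquivQuotSpan hpe).map_eq_zero_iff]
    have := ZModXQuotSpanEquivQuotSpan_mk_apply hpe (X ^ p ^ n - X)
    rw [Polynomial.map_sub, Polynomial.map_pow, map_X] at this
    rw [this, Ideal.Quotient.eq_zero_iff_mem, Ideal.mem_span_singleton, map_sub, map_pow, aeval_X]
    exact mem_frobeniusFixed.1 (h ▸ Subring.mem_top θ)
  have hle := natDegree_le_of_dvd hdvd
    (FiniteField.X_pow_card_pow_sub_X_ne_zero _ hn hp.out.one_lt)
  rw [(minpoly.monic θ.isIntegral).natDegree_map, natDegree_minpoly_eq_finrank hθ,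
    FiniteField.X_pow_card_pow_sub_X_natDegree_eq _ hn hp.out.one_lt] at hle
  exact hdeg.not_ge hle

theorem dvd_subIndex_of_frobeniusFixed_eq_top (hn : n ≠ 0)
    (h : frobeniusFixed (𝓞 K) p n = ⊤) (hdeg : p ^ n < Module.finrank ℚ K)
    (hθ : Algebra.adjoin ℚ {(θ : K)} = ⊤) : p ∣ subIndex θ :=
  (dvd_exponent_of_frobeniusFixed_eq_top hn h hdeg hθ).trans exponent_dvd_subIndex

theorem adjoin_int_ne_top_of_frobeniusFixed_eq_top (hn : n ≠ 0)
    (h : frobeniusFixed (𝓞 K) p n = ⊤) (hdeg : p ^ n < Module.finrank ℚ K) :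
    Algebra.adjoin ℤ {θ} ≠ ⊤ := by
  intro htop
  have hdvd : p ∣ exponent θ := dvd_exponent_of_frobeniusFixed_eq_top hn h hdeg
    (adjoin_rat_eq_top_of_adjoin_int_eq_top htop)
  rw [exponent_eq_one_iff.2 htop, Nat.dvd_one] at hdvd
  exact hp.out.ne_one hdvd

end Index

theorem exists_two_mul_sub_one_eq {A : Type*} [CommRing A] [IsDomain A] [IsIntegrallyClosed A]
    (h2 : (2 : A) ≠ 0) {β c : A} (hβ : β ^ 2 = 1 + 4 * c) :
    ∃ α : A, 2 * α - 1 = β ∧ α ^ 2 = α + c := by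
  let ι := algebraMap A (FractionRing A)
  have hι : Function.Injective ι := IsFractionRing.injective A (FractionRing A)
  have h2' : (2 : FractionRing A) ≠ 0 := by
    simpa only [map_ofNat] using (map_ne_zero_iff ι hι).2 h2
  have hβ' : ι β ^ 2 = 1 + 4 * ι c := by
    simpa only [map_pow, map_add, map_one, map_mul, map_ofNat] using congrArg ι hβ
  have hroot : ((ι β + 1) / 2) ^ 2 = (ι β + 1) / 2 + ι c := by
    field_simp
    linear_combination hβ'
  have hint : IsIntegral A ((ι β + 1) / 2) := by
    refine ⟨X ^ 2 - X - C c, by monicity!, ?_⟩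
    simp only [eval₂_sub, eval₂_pow, eval₂_X, eval₂_C]
    linear_combination hroot
  obtain ⟨α, hα⟩ := IsIntegrallyClosed.isIntegral_iff.1 hint
  refine ⟨α, hι ?_, hι ?_⟩
  · rw [map_sub, map_mul, map_ofNat, map_one, hα]
    field_simp
    ring
  · rw [map_pow, map_add, hα, hroot]

section ModTwo

variable {A : Type*} [CommRing A]

theorem two_dvd_aeval_sq_sub_self {G : ℤ[X]} (hG : G ^ 2 - G ∈ Ideal.span {2, X ^ 3 - 1}) {x : A}
    (hx : 2 ∣ x ^ 3 - 1) : 2 ∣ aeval x G ^ 2 - aeval x G := by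
  obtain ⟨P, Q, hPQ⟩ := Ideal.mem_span_pair.1 hG
  have h : aeval x G ^ 2 - aeval x G = aeval x P * 2 + aeval x Q * (x ^ 3 - 1) := by
    simpa only [map_sub, map_add, map_mul, map_pow, map_one, map_ofNat, aeval_X] using
      congrArg (aeval x) hPQ.symm
  exact h ▸ dvd_add (dvd_mul_left _ _) (hx.mul_left _)

theorem mem_frobeniusFixed_two_two_of_two_dvd {x : A} (hx : 2 ∣ x ^ 3 - 1) :
    x ∈ frobeniusFixed A 2 2 := by
  have h : x ^ 2 ^ 2 - x = x * (x ^ 3 - 1) := by ring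
  exact mem_frobeniusFixed.2 (h ▸ by simpa using hx.mul_left x)

theorem mem_frobeniusFixed_two_two_of_sq_eq {x c : A} (hx : x ^ 2 = x + c)
    (hc : 2 ∣ c ^ 2 - c) : x ∈ frobeniusFixed A 2 2 := by
  have h : x ^ 2 ^ 2 - x = 2 * (x * c + c) + (c ^ 2 - c) := by
    linear_combination (x ^ 2 + x + c + 1) * hx
  exact mem_frobeniusFixed.2 (h ▸ by simpa using dvd_add (dvd_mul_right 2 _) hc)

theorem frobeniusFixed_adjoin_pair_eq_top {G : ℤ[X]}
    (hG : G ^ 2 - G ∈ Ideal.span {2, X ^ 3 - 1}) {θ α : A} (hθ : 2 * α - 1 = θ ^ 3)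
    (hα : α ^ 2 = α + aeval θ G) : frobeniusFixed (Algebra.adjoin ℤ {θ, α}) 2 2 = ⊤ := by
  let θ' : Algebra.adjoin ℤ {θ, α} := ⟨θ, Algebra.subset_adjoin (by simp)⟩
  let α' : Algebra.adjoin ℤ {θ, α} := ⟨α, Algebra.subset_adjoin (by simp)⟩
  have hθ' : 2 ∣ θ' ^ 3 - 1 := ⟨α' - 1, Subtype.ext <| by
    change θ ^ 3 - 1 = 2 * (α - 1)
    linear_combination -hθ⟩
  have hα' : α' ^ 2 = α' + aeval θ' G := Subtype.ext <| by
    simpa [θ', α'] using hα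
  refine frobeniusFixed_adjoin_eq_top fun x hx ↦ ?_
  rcases hx with hxθ | hxα
  · obtain rfl : x = θ' := Subtype.ext hxθ
    exact mem_frobeniusFixed_two_two_of_two_dvd hθ'
  · obtain rfl : x = α' := Subtype.ext hxα
    exact mem_frobeniusFixed_two_two_of_sq_eq hα' (two_dvd_aeval_sq_sub_self hG hθ')

end ModTwo

theorem frobeniusFixed_ringOfIntegers_eq_top {K : Type*} [Field K] [NumberField K] {θ : 𝓞 K}
    (hgen : Algebra.adjoin ℚ {(θ : K)} = ⊤) {G : ℤ[X]} (hG : G ^ 2 - G ∈ Ideal.span {2, X ^ 3 - 1})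
    (hθ : θ ^ 6 = 1 + 4 * aeval θ G) :
    frobeniusFixed (𝓞 K) 2 2 = ⊤ := by
  obtain ⟨α, hθα, hα⟩ := exists_two_mul_sub_one_eq two_ne_zero
    (show (θ ^ 3) ^ 2 = 1 + 4 * aeval θ G by rw [← pow_mul, hθ])
  have hle : Algebra.adjoin ℤ {θ} ≤ Algebra.adjoin ℤ {θ, α} := Algebra.adjoin_mono (by simp)
  exact frobeniusFixed_eq_top_of_subalgebra two_ne_zero
    (IsLeftCancelMulZero.mul_left_cancel_of_ne_zero (by simp))
    (frobeniusFixed_adjoin_pair_eq_top hG hθα hα) (exponent_ne_zero_of_adjoin_eq_top hgen)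
    fun x ↦ hle (natCast_exponent_mul_mem_adjoin x)

theorem exists_trinomial_eq_X_pow_six_sub {m : ℕ} (hm : m < 6) {a b : ℤ} (ha : a ≡ 0 [ZMOD 8])
    (hb : b ≡ -1 [ZMOD 4]) :
    ∃ G : ℤ[X], G.natDegree < 6 ∧ G ^ 2 - G ∈ Ideal.span {2, X ^ 3 - 1} ∧
      X ^ 6 + C a * X ^ m + C b = X ^ 6 - (1 + 4 * G) := by
  obtain ⟨g, rfl⟩ := Int.modEq_zero_iff_dvd.1 ha
  obtain ⟨e, he⟩ := hb.dvd
  obtain rfl : b = -(1 + 4 * e) := by linarith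
  obtain ⟨w, hw⟩ : (2 : ℤ) ∣ e ^ 2 - e :=
    Int.ModEq.dvd (Int.ModEq.pow_prime_eq_self Nat.prime_two e).symm
  refine ⟨C e - C (2 * g) * X ^ m, ?_, ?_, ?_⟩
  · exact (natDegree_sub_le_of_le (natDegree_C e).le (natDegree_C_mul_X_pow_le _ m)).trans_lt
      (by simpa using hm)
  · have hCw : (C e ^ 2 - C e : ℤ[X]) = 2 * C w := by
      simpa only [C_sub, C_pow, C_mul, C_ofNat] using congrArg C hw
    refine Ideal.mem_of_dvd _
      ⟨C w + C g * X ^ m - 2 * C e * C g * X ^ m + 2 * (C g * X ^ m) ^ 2, ?_⟩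
      (Ideal.subset_span (Set.mem_insert 2 _))
    rw [C_mul, C_ofNat]
    linear_combination hCw
  · simp only [C_neg, C_add, C_mul, C_1, C_ofNat]
    ring

/-- Writing `g i` for the coefficients of `G`, the condition `hG` amounts to
`g 1 + g 4 ≡ g 2 + g 5 (mod 2)`. Besides the trinomials with `8 ∣ a` it therefore admits those with
`m = 3` and `4 ∣ a`. -/
theorem two_divides_index_of_sextic_general
    {K : Type*} [Field K] [NumberField K] (θ : 𝓞 K)
    (G : ℤ[X]) (hdeg : G.natDegree < 6) (hG : G ^ 2 - G ∈ Ideal.span {2, X ^ 3 - 1})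
    (F : ℤ[X]) (hF : F = X ^ 6 - (1 + 4 * G))
    (hirr : Irreducible F)
    (hroot : Polynomial.aeval (θ : K) F = 0)
    (hgen : Algebra.adjoin ℚ {(θ : K)} = ⊤) :
    (∀ θ' : 𝓞 K, Algebra.adjoin ℚ {(θ' : K)} = ⊤ → 2 ∣ subIndex θ') ∧
      ¬ ∃ β : 𝓞 K, Algebra.adjoin ℤ ({β} : Set (𝓞 K)) = ⊤ := by
  have hlt : (1 + 4 * G).natDegree < 6 :=
    (natDegree_add_le_of_le natDegree_one.le (natDegree_C_mul_le 4 G)).trans_lt (by simpa)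
  have hlt' : (1 + 4 * G).natDegree < (X ^ 6 : ℤ[X]).natDegree := by rwa [natDegree_X_pow]
  have hmonic : F.Monic :=
    hF ▸ monic_X_pow_sub ((degree_lt_degree hlt').trans_eq (degree_X_pow 6))
  have hF6 : F.natDegree = 6 := by
    rw [hF, natDegree_sub_eq_left_of_natDegree_lt hlt', natDegree_X_pow]
  have hθroot : aeval θ F = 0 := (aeval_algebraMap_eq_zero_iff K θ F).1 hroot
  have hfinrank : 2 ^ 2 < Module.finrank ℚ K := by
    rw [finrank_eq_natDegree_of_irreducible hmonic hirr hθroot hgen, hF6]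
    norm_num
  have hθ : θ ^ 6 = 1 + 4 * aeval θ G := sub_eq_zero.1 <| by
    simpa only [hF, map_sub, map_pow, aeval_X, map_add, map_one, map_mul, map_ofNat] using hθroot
  have hfix := frobeniusFixed_ringOfIntegers_eq_top hgen hG hθ
  exact ⟨fun θ' hθ' ↦ dvd_subIndex_of_frobeniusFixed_eq_top two_ne_zero hfix hfinrank hθ',
    fun ⟨β, hβ⟩ ↦ adjoin_int_ne_top_of_frobeniusFixed_eq_top two_ne_zero hfix hfinrank hβ⟩

/-- If `K` is a sextic field generated by a root of an irreducible trinomial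
`x^6 + a x^m + b` with `a ≡ 0 (mod 8)` and `b ≡ -1 (mod 4)`, then `2` divides
`i(K)`; in particular `K` is not monogenic. -/
theorem two_divides_index_of_sextic
    {K : Type*} [Field K] [NumberField K] (θ : 𝓞 K)
    (m : ℕ) (hm : 1 ≤ m) (hm5 : m ≤ 5)
    (a b : ℤ)
    (F : ℤ[X]) (hF : F = X ^ 6 + C a * X ^ m + C b)
    (hirr : Irreducible F)
    (hroot : Polynomial.aeval (θ : K) F = 0)
    (hgen : Algebra.adjoin ℚ {(θ : K)} = ⊤)
    (ha : a ≡ 0 [ZMOD 8])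
    (hb : b ≡ -1 [ZMOD 4]) :
    (∀ θ' : 𝓞 K, Algebra.adjoin ℚ {(θ' : K)} = ⊤ → 2 ∣ subIndex θ') ∧
      ¬ ∃ β : 𝓞 K, Algebra.adjoin ℤ ({β} : Set (𝓞 K)) = ⊤ := by
  obtain ⟨G, hdeg, hG, hFG⟩ := exists_trinomial_eq_X_pow_six_sub (Nat.lt_succ_of_le hm5) ha hb
  exact two_divides_index_of_sextic_general θ G hdeg hG F (hF.trans hFG) hirr hroot hgen
end

section
/- Let p be a rational prime and K a number field with ring of integers ℤ_K. For a positive integer f, let P_p(f) denote the number of distinct prime ideals of ℤ_K lying above p with residue degree f, and N_p(f) the number of monic irreducible polynomials of degree f in 𝔽_p[x]. If P_p(f) > N_p(f) for some positive integer f, then p divides (ℤ_K : ℤ[θ]) for every θ ∈ ℤ_K with K = ℚ(θ); that is, p is a common index divisor of K. -/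
open Polynomial NumberField

/-- `N_p(f)`: the number of monic irreducible polynomials of degree `f` in `𝔽_p[x]`. -/
noncomputable def numMonicIrr (p f : ℕ) : ℕ :=
  Nat.card {g : (ZMod p)[X] // g.Monic ∧ Irreducible g ∧ g.natDegree = f}

/-!
If `p` does not divide the index of `ℤ[θ]` in `R`, then `ℤ[θ] → R ⧸ pR` is surjective, so
`R ⧸ pR` is generated over `𝔽_p` by the class of `θ`. A maximal ideal of a monogenic algebra `k[α]`
is determined by the minimal polynomial over `k` of its residue of `α`, a monic irreducible
polynomial whose degree is the residue degree. Hence there are at most as many primes of residue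
degree `f` above `p` as there are monic irreducible polynomials of degree `f` over `𝔽_p`.
-/

section MonogenicAlgebra

variable {k A : Type*} [Field k] [CommRing A] [Algebra k A] {α : A}

theorem aeval_mem_iff_minpoly_mk_dvd (P : Ideal A) (q : k[X]) :
    aeval α q ∈ P ↔ minpoly k (Ideal.Quotient.mk P α) ∣ q := by
  rw [minpoly.dvd_iff, ← Ideal.Quotient.eq_zero_iff_mem, ← Ideal.Quotient.mkₐ_eq_mk k,
    aeval_algHom_apply]

theorem injective_minpoly_mk_of_adjoin_eq_top (hα : Algebra.adjoin k {α} = ⊤) :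
    Function.Injective fun P : Ideal A ↦ minpoly k (Ideal.Quotient.mk P α) := by
  intro P Q (hPQ : minpoly k _ = minpoly k _)
  ext x
  obtain ⟨q, rfl⟩ : x ∈ (aeval (R := k) α).range := by
    rw [← Algebra.adjoin_singleton_eq_range_aeval, hα]
    exact Algebra.mem_top
  change aeval α q ∈ P ↔ aeval α q ∈ Q
  rw [aeval_mem_iff_minpoly_mk_dvd, aeval_mem_iff_minpoly_mk_dvd, hPQ]

theorem natDegree_minpoly_of_adjoin_eq_top (hint : IsIntegral k α)
    (hα : Algebra.adjoin k {α} = ⊤) : (minpoly k α).natDegree = Module.finrank k A := by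
  rw [(PowerBasis.ofAdjoinEqTop hint hα).finrank, PowerBasis.ofAdjoinEqTop_dim]

theorem adjoin_mk_eq_top (hα : Algebra.adjoin k {α} = ⊤) (P : Ideal A) :
    Algebra.adjoin k {Ideal.Quotient.mk P α} = ⊤ := by
  rw [← Ideal.Quotient.mkₐ_eq_mk k, ← Set.image_singleton, ← AlgHom.map_adjoin, hα,
    Algebra.map_top, AlgHom.range_eq_top]
  exact Ideal.Quotient.mkₐ_surjective k P

end MonogenicAlgebra

theorem finite_setOf_monic_natDegree_eq (R : Type*) [Ring R] [Nontrivial R] [Finite R] (n : ℕ) :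
    {g : R[X] | g.Monic ∧ g.natDegree = n}.Finite :=
  .of_equiv _ ((monicEquivDegreeLT n).trans (degreeLTEquiv R n).toEquiv).symm

theorem natCard_maximal_le_natCard_monic_irreducible {k A : Type*} [Field k] [Finite k] [CommRing A]
    [Algebra k A] {α : A} (hα : Algebra.adjoin k {α} = ⊤) (f : ℕ) :
    Nat.card {P : Ideal A // P.IsMaximal ∧ Nat.card (A ⧸ P) = Nat.card k ^ f} ≤
      Nat.card {g : k[X] // g.Monic ∧ Irreducible g ∧ g.natDegree = f} := by
  have : Finite {g : k[X] // g.Monic ∧ Irreducible g ∧ g.natDegree = f} :=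
    (finite_setOf_monic_natDegree_eq k f).subset fun _ ⟨hmonic, _, hdeg⟩ ↦ ⟨hmonic, hdeg⟩
  refine Nat.card_le_card_of_injective (Subtype.map _ fun P ⟨hmax, hcard⟩ ↦ ?_)
    (Subtype.map_injective _ (injective_minpoly_mk_of_adjoin_eq_top hα))
  have : Finite (A ⧸ P) :=
    Nat.finite_of_card_ne_zero (hcard ▸ pow_ne_zero f Nat.card_pos.ne')
  have hint : IsIntegral k (Ideal.Quotient.mk P α) := .of_finite k _
  refine ⟨minpoly.monic hint, minpoly.irreducible hint, ?_⟩
  rw [Module.natCard_eq_pow_finrank (K := k),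
    ← natDegree_minpoly_of_adjoin_eq_top hint (adjoin_mk_eq_top hα P)] at hcard
  exact Nat.pow_right_injective Finite.one_lt_card hcard

section Surjective

variable {R A : Type*} [CommRing R] [CommRing A] {φ : R →+* A}

theorem natCard_quotient_comap_of_surjective (hφ : Function.Surjective φ) (Q : Ideal A) :
    Nat.card (R ⧸ Q.comap φ) = Nat.card (A ⧸ Q) :=
  Nat.card_eq_of_bijective (Ideal.quotientMap Q φ le_rfl)
    ⟨Ideal.quotientMap_injective, Ideal.quotientMap_surjective hφ⟩

theorem natCard_maximal_of_surjective (hφ : Function.Surjective φ) (n : ℕ) :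
    Nat.card {Q : Ideal A // Q.IsMaximal ∧ Nat.card (A ⧸ Q) = n} =
      Nat.card {P : Ideal R // P.IsMaximal ∧ RingHom.ker φ ≤ P ∧ Nat.card (R ⧸ P) = n} := by
  refine Nat.card_eq_of_bijective (Subtype.map (Ideal.comap φ) fun Q ⟨hmax, hcard⟩ ↦
    ⟨Ideal.comap_isMaximal_of_surjective φ hφ, Ideal.comap_mono bot_le,
      (natCard_quotient_comap_of_surjective hφ Q).trans hcard⟩)
    ⟨Subtype.map_injective _ (Ideal.comap_injective_of_surjective φ hφ), ?_⟩
  rintro ⟨P, hmax, hker, hcard⟩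
  have hcomap : (P.map φ).comap φ = P := by
    rw [Ideal.comap_map_of_surjective' φ hφ, sup_eq_left.mpr hker]
  exact ⟨⟨P.map φ, .map_of_surjective_of_ker_le hφ hker,
    by rw [← natCard_quotient_comap_of_surjective hφ, hcomap, hcard]⟩, Subtype.ext hcomap⟩

theorem adjoin_zmod_map_eq_top_of_coprime_index {n : ℕ} [Algebra (ZMod n) A]
    (hφ : Function.Surjective φ) {θ : R}
    (hθ : (Algebra.adjoin ℤ {θ}).toSubring.toAddSubgroup.index.Coprime n) :
    Algebra.adjoin (ZMod n) {φ θ} = ⊤ := by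
  let m := (Algebra.adjoin ℤ {θ}).toSubring.toAddSubgroup.index
  have map_le : Algebra.adjoin ℤ {θ} ≤
      ((Algebra.adjoin (ZMod n) {φ θ}).restrictScalars ℤ).comap φ.toIntAlgHom :=
    Algebra.adjoin_singleton_le (Algebra.self_mem_adjoin_singleton (ZMod n) (φ θ))
  refine eq_top_iff.mpr fun a _ ↦ ?_
  obtain ⟨r, rfl⟩ := hφ a
  have hmr : φ (m • r) ∈ Algebra.adjoin (ZMod n) {φ θ} :=
    map_le (AddSubgroup.nsmul_index_mem (Algebra.adjoin ℤ {θ}).toSubring.toAddSubgroup r)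
  have hinv : (m : ZMod n)⁻¹ • φ (m • r) = φ r := by
    rw [map_nsmul, ← Nat.cast_smul_eq_nsmul (ZMod n), smul_smul, mul_comm,
      ZMod.coe_mul_inv_eq_one m hθ, one_smul]
  exact hinv ▸ Subalgebra.smul_mem _ hmr _

end Surjective

theorem common_index_divisor_of_many_primes_general {R : Type*} [CommRing R] {p : ℕ}
    (hp : p.Prime) (f : ℕ) {θ : R}
    (hθ : ¬ p ∣ (Algebra.adjoin ℤ {θ}).toSubring.toAddSubgroup.index) :
    Nat.card {P : Ideal R // P.IsMaximal ∧ (p : R) ∈ P ∧ Nat.card (R ⧸ P) = p ^ f} ≤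
      numMonicIrr p f := by
  have : Fact p.Prime := ⟨hp⟩
  let I : Ideal R := Ideal.span {(p : R)}
  have hpI : (p : R ⧸ I) = 0 := by
    simpa using Ideal.Quotient.eq_zero_iff_mem.mpr (Ideal.mem_span_singleton_self (p : R))
  let : Algebra (ZMod p) (R ⧸ I) := ZMod.algebra' _ _ (ringChar.dvd hpI)
  have hgen : Algebra.adjoin (ZMod p) {Ideal.Quotient.mk I θ} = ⊤ :=
    adjoin_zmod_map_eq_top_of_coprime_index Ideal.Quotient.mk_surjective
      (hp.coprime_iff_not_dvd.mpr hθ).symm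
  have hcount := natCard_maximal_le_natCard_monic_irreducible hgen f
  rw [Nat.card_zmod, natCard_maximal_of_surjective Ideal.Quotient.mk_surjective] at hcount
  simpa only [numMonicIrr, I, Ideal.mk_ker, Ideal.span_singleton_le_iff_mem] using hcount

/-- If the number of primes of `ℤ_K` above `p` with residue degree `f` exceeds the
number of monic irreducible polynomials of degree `f` over `𝔽_p`, then `p` divides
`(ℤ_K : ℤ[θ])` for every generator `θ`, i.e. `p` is a common index divisor of `K`. -/
theorem common_index_divisor_of_many_primes
    {K : Type*} [Field K] [NumberField K]
    (p : ℕ) (hp : p.Prime) (f : ℕ) (hf : 0 < f)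
    (h : numMonicIrr p f <
      Nat.card {P : Ideal (𝓞 K) // P.IsMaximal ∧ (p : 𝓞 K) ∈ P ∧
        Nat.card (𝓞 K ⧸ P) = p ^ f}) :
    ∀ θ : 𝓞 K, Algebra.adjoin ℚ {(θ : K)} = ⊤ → p ∣ subIndex θ := fun _ _ ↦
  by_contra fun hdvd ↦ h.not_ge (common_index_divisor_of_many_primes_general hp f hdvd)
end

section
/- Let K = ℚ(θ) be a sextic number field generated by a root θ of a monic irreducible trinomial F(x) = x^6 + a x^m + b ∈ ℤ[x] with 1 ≤ m ≤ 5, where a ≡ 0 (mod 8) and b ≡ −1 (mod 4). Then there exist at least two distinct prime ideals of ℤ_K lying above 2 with residue degree 2. -/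
open Polynomial NumberField

/-!
Write `a = 8c` and `b = -1 - 4k`. Since `(θ³)² = 1 + 4(k - 2cθᵐ)`, the element `β = (θ³ + 1) / 2` is
integral, and the order `ℤ[θ, β]` is presented by `2y = x³ + 1`, `y² - y = k - 2cxᵐ`. Modulo `2`
these equations become `x³ = 1`, `y² = y + k`, which have six solutions over an algebraically closed
field `E` of characteristic `2`. They are étale at `2`, so distinct embeddings `K → ℚ̄` reduce to
distinct solutions over `E`. As `K` has six embeddings and `𝓞 K` has at most six homomorphisms to
`E`, these homomorphisms correspond exactly to the six solutions. Every solution is fixed by the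
square of Frobenius, so each homomorphism lands in `𝔽₄`, and it is onto `𝔽₄` when `x` is a primitive
cube root of unity `ω`. The kernels over `(ω, kω)` and `(ω, kω + 1)` are separated by `β - kθ`.
-/

theorem finrank_eq_natDegree_of_adjoin_eq_top {R k L : Type*} [CommRing R] [IsDomain R]
    [IsIntegrallyClosed R] [Field k] [Algebra R k] [IsFractionRing R k] [Field L] [Algebra R L]
    [Algebra k L] [IsScalarTower R k L] {f : R[X]} (hmonic : f.Monic) (hirr : Irreducible f)
    {x : L} (hroot : aeval x f = 0) (hgen : Algebra.adjoin k {x} = ⊤) :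
    Module.finrank k L = f.natDegree := by
  have hint : IsIntegral R x := ⟨f, hmonic, hroot⟩
  have hminpoly : f.map (algebraMap R k) = minpoly k x :=
    minpoly.eq_of_irreducible_of_monic
      (hmonic.irreducible_iff_irreducible_map_fraction_map.1 hirr)
      (by rwa [aeval_map_algebraMap]) (hmonic.map _)
  rw [← hmonic.natDegree_map (algebraMap R k), hminpoly,
    ← IntermediateField.adjoin.finrank hint.tower_top,
    IntermediateField.adjoin_eq_top_of_algebra k {x} hgen, IntermediateField.finrank_top']

theorem exists_two_mul_eq_add_one {R : Type*} [CommRing R] [IsDomain R] [IsIntegrallyClosed R]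
    (h2 : (2 : R) ≠ 0) {s t : R} (ht : t ^ 2 = 1 + 4 * s) :
    ∃ y, 2 * y = t + 1 ∧ y ^ 2 - y = s := by
  let Q := FractionRing R
  have hinj : Function.Injective (algebraMap R Q) := IsFractionRing.injective R Q
  have h2Q : (2 : Q) ≠ 0 := by
    simpa only [map_ofNat, map_zero] using hinj.ne h2
  have htQ : algebraMap R Q t ^ 2 = 1 + 4 * algebraMap R Q s := by
    simpa only [map_pow, map_add, map_one, map_mul, map_ofNat] using congrArg (algebraMap R Q) ht
  obtain ⟨z, hz⟩ : ∃ z : Q, 2 * z = algebraMap R Q t + 1 := ⟨_, mul_div_cancel₀ _ h2Q⟩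
  have hquad : z ^ 2 - z = algebraMap R Q s := by
    refine mul_left_cancel₀ (pow_ne_zero 2 h2Q) ?_
    linear_combination (2 * z + algebraMap R Q t - 1) * hz + htQ
  obtain ⟨y, rfl⟩ : ∃ y, algebraMap R Q y = z := by
    refine IsIntegrallyClosed.isIntegral_iff.1 ⟨X ^ 2 - X - C s, by monicity!, ?_⟩
    simp [hquad]
  refine ⟨y, hinj ?_, hinj ?_⟩
  · rw [map_mul, map_ofNat, hz, map_add, map_one]
  · rw [map_sub, map_pow, hquad]

theorem nonempty_algHom_of_ker_le {R A L : Type*} [CommRing R] [CommRing A] [Algebra R A]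
    [Algebra.IsIntegral R A] [Field L] [IsAlgClosed L] [Algebra R L]
    (h : RingHom.ker (algebraMap R A) ≤ RingHom.ker (algebraMap R L)) :
    Nonempty (A →ₐ[R] L) := by
  set p : Ideal R := RingHom.ker (algebraMap R L)
  have : p.IsPrime := RingHom.ker_isPrime _
  obtain ⟨Q, -, _, hQ⟩ := Ideal.exists_ideal_over_prime_of_isIntegral p (⊥ : Ideal A) h
  have : Q.LiesOver p := ⟨hQ.symm⟩
  let := (RingHom.kerLift (algebraMap R L)).toAlgebra
  have : IsScalarTower R (R ⧸ p) L := .of_algebraMap_eq fun _ => rfl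
  have : FaithfulSMul (R ⧸ p) L :=
    (faithfulSMul_iff_algebraMap_injective _ _).2 (RingHom.kerLift_injective _)
  have : Module.IsTorsionFree (R ⧸ p) (A ⧸ Q) :=
    Module.isTorsionFree_iff_faithfulSMul.2 inferInstance
  let f : A ⧸ Q →ₐ[R ⧸ p] L := IsAlgClosed.lift
  exact ⟨(f.restrictScalars R).comp (Ideal.Quotient.mkₐ R Q)⟩

theorem natCard_quotient_ker_eq {A E : Type*} [CommRing A] [CommRing E] [IsDomain E] (φ : A →+* E)
    {n : ℕ} [NeZero n] {ζ : E} (hζ : IsPrimitiveRoot ζ n) (hrange : ζ ∈ φ.range)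
    (hφ : ∀ a, φ a ^ (n + 1) = φ a) :
    Nat.card (A ⧸ RingHom.ker φ) = n + 1 := by
  classical
  have hset : (φ.range : Set E) = ↑(insert 0 (nthRootsFinset n (1 : E))) := by
    ext x
    simp only [SetLike.mem_coe, Finset.mem_insert, mem_nthRootsFinset (NeZero.pos n)]
    constructor
    · rintro ⟨a, rfl⟩
      refine or_iff_not_imp_left.2 fun hne => mul_right_cancel₀ hne ?_
      rw [← pow_succ, hφ, one_mul]
    · rintro (rfl | hx)
      · exact zero_mem _
      · obtain ⟨i, -, rfl⟩ := hζ.eq_pow_of_pow_eq_one hx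
        exact pow_mem hrange i
  calc Nat.card (A ⧸ RingHom.ker φ) = (φ.range : Set E).ncard :=
        Nat.card_congr (RingHom.quotientKerEquivRange φ).toEquiv
    _ = n + 1 := by
        rw [hset, Set.ncard_coe_finset, Finset.card_insert_of_notMem, hζ.card_nthRootsFinset]
        simp [mem_nthRootsFinset (NeZero.pos n), NeZero.ne n]

/-- A solution in `R` of the equations `2y = x³ + 1`, `y² - y = k - 2cxᵐ`, which over `ℤ` present
the order `ℤ[θ, (θ³ + 1) / 2]` for `θ` a root of `X⁶ + 8cXᵐ - (1 + 4k)`. Thus `SexticPoint k c m R`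
stands for the set of ring homomorphisms from that order to `R`. -/
@[ext]
structure SexticPoint (k c : ℤ) (m : ℕ) (R : Type*) [CommRing R] where
  x : R
  y : R
  two_mul_y : 2 * y = x ^ 3 + 1
  y_sq_sub_y : y ^ 2 - y = k - 2 * c * x ^ m

namespace SexticPoint

variable {k c : ℤ} {m : ℕ} {R S : Type*} [CommRing R] [CommRing S]

/-- The image of a solution under a ring homomorphism. -/
def map (p : SexticPoint k c m R) (f : R →+* S) : SexticPoint k c m S where
  x := f p.x
  y := f p.y
  two_mul_y := by
    simpa only [map_mul, map_add, map_pow, map_one, map_ofNat] using congrArg f p.two_mul_y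
  y_sq_sub_y := by
    simpa only [map_sub, map_mul, map_pow, map_ofNat, map_intCast] using congrArg f p.y_sq_sub_y

theorem exists_x_eq [IsDomain R] [IsIntegrallyClosed R] (h2 : (2 : R) ≠ 0) {θ : R}
    (hθ : aeval θ (X ^ 6 + C (8 * c) * X ^ m + C (-1 - 4 * k) : ℤ[X]) = 0) :
    ∃ p : SexticPoint k c m R, p.x = θ := by
  have hsq : (θ ^ 3) ^ 2 = 1 + 4 * (k - 2 * c * θ ^ m) := by
    simp only [map_add, map_sub, map_mul, map_neg, map_pow, map_one, map_ofNat, map_intCast,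
      aeval_X, eq_intCast] at hθ
    linear_combination hθ
  obtain ⟨β, hβ, hβ'⟩ := exists_two_mul_eq_add_one h2 hsq
  exact ⟨⟨θ, β, hβ, hβ'⟩, rfl⟩

section CharTwo

variable [CharP S 2]

theorem x_pow_three (p : SexticPoint k c m S) : p.x ^ 3 = 1 := by
  have h2 : (2 : S) = 0 := CharTwo.two_eq_zero
  linear_combination (p.y - 1) * h2 - p.two_mul_y

theorem y_sq (p : SexticPoint k c m S) : p.y ^ 2 = p.y + k := by
  have h2 : (2 : S) = 0 := CharTwo.two_eq_zero
  linear_combination p.y_sq_sub_y - c * p.x ^ m * h2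

/-- The solution with given coordinates in characteristic `2`, where the equations reduce to
`x³ = 1` and `y² = y + k`. -/
def ofCharTwo (x y : S) (hx : x ^ 3 = 1) (hy : y ^ 2 = y + k) : SexticPoint k c m S where
  x := x
  y := y
  two_mul_y := by
    have h2 : (2 : S) = 0 := CharTwo.two_eq_zero
    linear_combination (y - 1) * h2 - hx
  y_sq_sub_y := by
    have h2 : (2 : S) = 0 := CharTwo.two_eq_zero
    linear_combination hy + c * x ^ m * h2

theorem map_injective [IsDomain R] [IsDomain S] (f : R →+* S) :
    Function.Injective fun p : SexticPoint k c m R => p.map f := by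
  intro p q hpq
  have h2 : (2 : S) = 0 := CharTwo.two_eq_zero
  have hx : f p.x = f q.x := congrArg x hpq
  have hy : f p.y = f q.y := congrArg y hpq
  have hfx : f q.x ^ 3 = 1 := (q.map f).x_pow_three
  have hsum : f (p.y + q.y - 1) = 1 := by
    rw [map_sub, map_add, map_one, hy]
    linear_combination (f q.y - 1) * h2
  have hx_eq : p.x = q.x := by
    by_contra hne
    obtain ⟨d, hd⟩ := sub_dvd_pow_sub_pow p.x q.x m
    -- Eliminate `p.y - q.y` from the differences of the equations, then cancel `p.x - q.x`.
    have hprod : (p.x ^ 2 + p.x * q.x + q.x ^ 2) * (p.y + q.y - 1) = -4 * c * d := by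
      refine mul_left_cancel₀ (sub_ne_zero.2 hne) ?_
      linear_combination (1 - p.y - q.y) * (p.two_mul_y - q.two_mul_y) +
        2 * (p.y_sq_sub_y - q.y_sq_sub_y) - 4 * c * hd
    have hzero : f q.x ^ 2 = 0 := by
      have := congrArg f hprod
      rw [map_mul, hsum] at this
      simp only [map_add, map_mul, map_pow, map_neg, map_ofNat, hx] at this
      linear_combination this - (f q.x ^ 2 + 2 * f c * f d) * h2
    exact one_ne_zero (by linear_combination f q.x * hzero - hfx : (1 : S) = 0)
  have hy_eq : p.y = q.y := by
    have hprod : (p.y - q.y) * (p.y + q.y - 1) = 0 := by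
      linear_combination p.y_sq_sub_y - q.y_sq_sub_y - 2 * c * congrArg (· ^ m) hx_eq
    refine sub_eq_zero.1 ((mul_eq_zero.1 hprod).resolve_right fun h => ?_)
    exact one_ne_zero (hsum.symm.trans (by rw [h, map_zero]))
  exact SexticPoint.ext hx_eq hy_eq

theorem finite_and_natCard_le [IsDomain S] :
    Finite (SexticPoint k c m S) ∧ Nat.card (SexticPoint k c m S) ≤ 6 := by
  classical
  let xs : Finset S := (nthRoots 3 1).toFinset
  let ys : Finset S := (X ^ 2 - X - C (k : S)).roots.toFinset
  have hmonic : (X ^ 2 - X - C (k : S)).Monic := by monicity!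
  have hdeg : (X ^ 2 - X - C (k : S)).natDegree = 2 := by compute_degree!
  have hxs : xs.card ≤ 3 := (Multiset.toFinset_card_le _).trans (card_nthRoots 3 1)
  have hys : ys.card ≤ 2 := by
    rw [← hdeg]
    exact (Multiset.toFinset_card_le _).trans (card_roots' _)
  let coords (p : SexticPoint k c m S) : xs × ys :=
    (⟨p.x, by simp [xs, mem_nthRoots, p.x_pow_three]⟩,
      ⟨p.y, by
        rw [Multiset.mem_toFinset, mem_roots hmonic.ne_zero]
        simp [p.y_sq]⟩)
  have hcoords : Function.Injective coords := fun p q h =>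
    SexticPoint.ext (congrArg (fun z => (z.1 : S)) h) (congrArg (fun z => (z.2 : S)) h)
  refine ⟨.of_injective coords hcoords, (Nat.card_le_card_of_injective coords hcoords).trans ?_⟩
  rw [Nat.card_prod, Nat.card_eq_finsetCard, Nat.card_eq_finsetCard]
  exact Nat.mul_le_mul hxs hys

end CharTwo

section NumberField

variable {K : Type*} [Field K] [NumberField K] {E : Type*} [Field E] [CharP E 2] [IsAlgClosed E]

theorem bijective_map (p : SexticPoint k c m (𝓞 K))
    (hgen : Algebra.adjoin ℚ {(p.x : K)} = ⊤) (hrank : Module.finrank ℚ K = 6) :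
    Function.Bijective fun ψ : 𝓞 K →ₐ[ℤ] E => p.map (ψ : 𝓞 K →+* E) := by
  let Ω := AlgebraicClosure ℚ
  obtain ⟨hfin, hcard⟩ := finite_and_natCard_le (k := k) (c := c) (m := m) (S := E)
  obtain ⟨π⟩ : Nonempty (𝓞 Ω →ₐ[ℤ] E) := nonempty_algHom_of_ker_le (by
    rw [(RingHom.injective_iff_ker_eq_bot _).1 (FaithfulSMul.algebraMap_injective ℤ (𝓞 Ω))]
    exact bot_le)
  let lift (σ : K →ₐ[ℚ] Ω) : 𝓞 K →+* 𝓞 Ω := RingOfIntegers.mapRingHom (σ : K →+* Ω)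
  let reduce (σ : K →ₐ[ℚ] Ω) : 𝓞 K →ₐ[ℤ] E := π.comp (lift σ).toIntAlgHom
  have hlift : Function.Injective fun σ => p.map (lift σ) := by
    intro σ τ h
    refine AlgHom.ext_of_adjoin_eq_top hgen (Set.eqOn_singleton.2 ?_)
    exact congrArg (fun q => (q.x : Ω)) h
  have hpoint : Function.Injective fun σ => p.map (reduce σ : 𝓞 K →+* E) :=
    (map_injective (π : 𝓞 Ω →+* E)).comp hlift
  have hemb : Nat.card (K →ₐ[ℚ] Ω) = 6 := by
    rw [Nat.card_eq_fintype_card, AlgHom.card, hrank]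
  have hhom : Nat.card (𝓞 K →ₐ[ℤ] E) ≤ 6 := by
    simpa only [RingOfIntegers.rank, hrank] using card_algHom_le_finrank ℤ (𝓞 K) E
  have hreduce : Function.Bijective reduce :=
    (Function.Injective.of_comp (f := fun ψ : 𝓞 K →ₐ[ℤ] E => p.map (ψ : 𝓞 K →+* E)) hpoint)
      |>.bijective_of_nat_card_le (hemb ▸ hhom)
  exact (Function.Bijective.of_comp_iff _ hreduce).1
    (hpoint.bijective_of_nat_card_le (hemb ▸ hcard))

theorem apply_pow_four (p : SexticPoint k c m (𝓞 K)) (hgen : Algebra.adjoin ℚ {(p.x : K)} = ⊤)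
    (hrank : Module.finrank ℚ K = 6) (ψ : 𝓞 K →ₐ[ℤ] E) (a : 𝓞 K) : ψ a ^ 4 = ψ a := by
  have h2 : (2 : E) = 0 := CharTwo.two_eq_zero
  have hk : (k : E) ^ 2 = k := map_intCast (frobenius E 2) k
  let ψ' : 𝓞 K →ₐ[ℤ] E := ((iterateFrobenius E 2 2).comp (ψ : 𝓞 K →+* E)).toIntAlgHom
  have hψ' (b : 𝓞 K) : ψ' b = ψ b ^ 4 := iterateFrobenius_def 2 2 (ψ b)
  have hx : ψ p.x ^ 3 = 1 := (p.map (ψ : 𝓞 K →+* E)).x_pow_three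
  have hy : ψ p.y ^ 2 = ψ p.y + k := (p.map (ψ : 𝓞 K →+* E)).y_sq
  have hfixed : ψ' = ψ := by
    refine (p.bijective_map (E := E) hgen hrank).injective (SexticPoint.ext ?_ ?_)
    · change ψ' p.x = ψ p.x
      rw [hψ']
      linear_combination ψ p.x * hx
    · change ψ' p.y = ψ p.y
      rw [hψ']
      linear_combination (ψ p.y ^ 2 + ψ p.y + k + 1) * hy + hk + k * (ψ p.y + 1) * h2
  rw [← hψ', hfixed]

theorem ker_isMaximal_and_natCard_eq (p : SexticPoint k c m (𝓞 K))
    (hgen : Algebra.adjoin ℚ {(p.x : K)} = ⊤) (hrank : Module.finrank ℚ K = 6)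
    (ψ : 𝓞 K →ₐ[ℤ] E) (hψ : IsPrimitiveRoot (ψ p.x) 3) :
    (RingHom.ker ψ).IsMaximal ∧ (2 : 𝓞 K) ∈ RingHom.ker ψ ∧
      Nat.card (𝓞 K ⧸ RingHom.ker ψ) = 2 ^ 2 := by
  have htwo : (2 : 𝓞 K) ∈ RingHom.ker ψ := by
    rw [RingHom.mem_ker, map_ofNat, CharTwo.two_eq_zero]
  have hne : RingHom.ker ψ ≠ ⊥ := fun h => two_ne_zero (Ideal.mem_bot.1 (h ▸ htwo))
  exact ⟨(RingHom.ker_isPrime ψ).isMaximal hne, htwo,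
    natCard_quotient_ker_eq (ψ : 𝓞 K →+* E) hψ ⟨p.x, rfl⟩ (p.apply_pow_four hgen hrank ψ)⟩

theorem exists_ker_ne_ker (p : SexticPoint k c m (𝓞 K))
    (hgen : Algebra.adjoin ℚ {(p.x : K)} = ⊤) (hrank : Module.finrank ℚ K = 6)
    {ω : E} (hω : IsPrimitiveRoot ω 3) :
    ∃ ψ₁ ψ₂ : 𝓞 K →ₐ[ℤ] E, ψ₁ p.x = ω ∧ ψ₂ p.x = ω ∧ RingHom.ker ψ₁ ≠ RingHom.ker ψ₂ := by
  have h2 : (2 : E) = 0 := CharTwo.two_eq_zero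
  have hk : (k : E) ^ 2 = k := map_intCast (frobenius E 2) k
  have hquad : ω ^ 2 + ω + 1 = 0 := by
    have hsum := hω.geom_sum_eq_zero (by norm_num)
    simp only [Finset.sum_range_succ, Finset.sum_range_zero, pow_zero, pow_one] at hsum
    linear_combination hsum
  have hy₁ : (k * ω) ^ 2 = k * ω + k := by
    linear_combination ω ^ 2 * hk + k * hquad - k * (ω + 1) * h2
  have hy₂ : (k * ω + 1) ^ 2 = k * ω + 1 + k := by
    linear_combination hy₁ + k * ω * h2
  have hsurj := (p.bijective_map (E := E) hgen hrank).surjective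
  obtain ⟨ψ₁, h₁⟩ := hsurj (ofCharTwo ω (k * ω) hω.pow_eq_one hy₁)
  obtain ⟨ψ₂, h₂⟩ := hsurj (ofCharTwo ω (k * ω + 1) hω.pow_eq_one hy₂)
  have hx₁ : ψ₁ p.x = ω := congrArg x h₁
  have hx₂ : ψ₂ p.x = ω := congrArg x h₂
  have hβ₁ : ψ₁ p.y = k * ω := congrArg y h₁
  have hβ₂ : ψ₂ p.y = k * ω + 1 := congrArg y h₂
  refine ⟨ψ₁, ψ₂, hx₁, hx₂, fun hker => ?_⟩
  have hmem : p.y - k * p.x ∈ RingHom.ker ψ₁ := by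
    rw [RingHom.mem_ker, map_sub, map_mul, map_intCast, hx₁, hβ₁, sub_self]
  rw [hker, RingHom.mem_ker, map_sub, map_mul, map_intCast, hx₂, hβ₂, add_sub_cancel_left] at hmem
  exact one_ne_zero hmem

end NumberField

end SexticPoint

/-- For a sextic field `K` defined by a trinomial `x^6 + a x^m + b` with
`a ≡ 0 (mod 8)` and `b ≡ -1 (mod 4)`, there are at least two distinct primes of
`ℤ_K` above `2` with residue degree `2`. -/
theorem two_primes_above_two_of_sextic
    {K : Type*} [Field K] [NumberField K] (θ : 𝓞 K)
    (m : ℕ) (hm : 1 ≤ m) (hm5 : m ≤ 5)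
    (a b : ℤ)
    (F : ℤ[X]) (hF : F = X ^ 6 + C a * X ^ m + C b)
    (hirr : Irreducible F)
    (hroot : Polynomial.aeval (θ : K) F = 0)
    (hgen : Algebra.adjoin ℚ {(θ : K)} = ⊤)
    (ha : a ≡ 0 [ZMOD 8])
    (hb : b ≡ -1 [ZMOD 4]) :
    ∃ P Q : Ideal (𝓞 K), P ≠ Q ∧
      P.IsMaximal ∧ (2 : 𝓞 K) ∈ P ∧ Nat.card (𝓞 K ⧸ P) = 2 ^ 2 ∧
      Q.IsMaximal ∧ (2 : 𝓞 K) ∈ Q ∧ Nat.card (𝓞 K ⧸ Q) = 2 ^ 2 := by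
  obtain ⟨c, rfl⟩ : (8 : ℤ) ∣ a := Int.modEq_zero_iff_dvd.1 ha
  obtain ⟨k, rfl⟩ : ∃ k, b = -1 - 4 * k := hb.dvd.imp fun _ hk => by linarith
  have hmonic : F.Monic := by rw [hF]; interval_cases m <;> monicity!
  have hdeg : F.natDegree = 6 := by rw [hF]; interval_cases m <;> compute_degree!
  have hrank : Module.finrank ℚ K = 6 :=
    hdeg ▸ finrank_eq_natDegree_of_adjoin_eq_top hmonic hirr hroot hgen
  have hθ : aeval θ F = 0 := RingOfIntegers.coe_injective
    ((aeval_algebraMap_apply K θ F).symm.trans (hroot.trans (map_zero _).symm))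
  obtain ⟨p, rfl⟩ := SexticPoint.exists_x_eq two_ne_zero (hF ▸ hθ)
  let E := AlgebraicClosure (ZMod 2)
  have : NeZero ((3 : ℕ) : E) := .of_not_dvd E (p := 2) (by norm_num)
  obtain ⟨ω, hω⟩ := HasEnoughRootsOfUnity.exists_primitiveRoot E 3
  obtain ⟨ψ₁, ψ₂, hψ₁, hψ₂, hne⟩ := p.exists_ker_ne_ker hgen hrank hω
  obtain ⟨hmax₁, htwo₁, hcard₁⟩ := p.ker_isMaximal_and_natCard_eq hgen hrank ψ₁ (hψ₁ ▸ hω)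
  obtain ⟨hmax₂, htwo₂, hcard₂⟩ := p.ker_isMaximal_and_natCard_eq hgen hrank ψ₂ (hψ₂ ▸ hω)
  exact ⟨_, _, hne, hmax₁, htwo₁, hcard₁, hmax₂, htwo₂, hcard₂⟩
end

section
/- Let m be an integer with 1 ≤ m ≤ 5 such that F(x) = x^6 + 72 x^m + 71 is irreducible over ℚ, and let K = ℚ(α) for a root α of F. Then above the prime 2 the ring ℤ_K has at least two distinct prime ideals of residue degree 1 and at least two distinct prime ideals of residue degree 2. -/
open Polynomial NumberField

/-!
Let `n` be odd and `F ≡ X ^ (2 * n) - 1` modulo `8`; here `n = 3`. Let `k = 𝔽_{2^d}` with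
`2 ^ d - 1 ∣ n`, and let `τ` be the Teichmüller lift to `W(k)` of a generator `ζ` of `kˣ`. Then
`τ ^ n = 1`, so at `a = ±τ` we have `F(a) ≡ 0` modulo `8`, while `F'(a)` is `2` times a unit.
Hensel's lemma in its strong form provides a root of `F` in `W(k)` congruent to `a` modulo `4`,
hence a homomorphism `𝓞 K → W(k) → k` mapping `α` to `±ζ = ζ`. It is surjective, and its kernel is
a prime above `2` with residue field `k`. The two kernels differ because
`θ = (α ^ n + 1) / 2` is an algebraic integer, which maps to `1` for `a = τ` and to `0` for
`a = -τ`.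
-/

section Hensel

variable {R : Type*} [CommRing R] {I : Ideal R} [HenselianRing R I]

lemma isUnit_of_sub_mem {x y : R} (hy : IsUnit y) (hxy : x - y ∈ I) : IsUnit x := by
  have := isLocalHom_of_le_jacobson_bot I HenselianRing.jac
  refine isUnit_of_map_unit (Ideal.Quotient.mk I) x ?_
  rw [Ideal.Quotient.eq.mpr hxy]
  exact hy.map _

lemma exists_mem_add_add_sq_mul_eval_eq_zero {e : R} (he : e ∈ I) (g : R[X]) :
    ∃ y ∈ I, e + y + y ^ 2 * g.eval y = 0 := by
  -- For `y = -e / z` the equation becomes monic in `z`, with simple root `1` modulo `I`.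
  set h := g.comp (C (-e) * X) with hh
  set N := h.natDegree
  set Q : R[X] := X ^ (N + 2) - X ^ (N + 1) + C e * h.reflect N with hQ
  have hdeg : (C e * h.reflect N).natDegree ≤ N :=
    (natDegree_C_mul_le _ _).trans (natDegree_reflect_le.trans (max_self N).le)
  have hQmonic : Q.Monic := by
    rw [hQ, sub_add]
    have hlower : (X ^ (N + 1) - C e * h.reflect N).natDegree ≤ N + 1 :=
      (natDegree_sub_le_of_le (natDegree_X_pow_le _) (hdeg.trans N.le_succ)).trans_eq (max_self _)
    refine monic_X_pow_sub ((degree_le_of_natDegree_le hlower).trans_lt ?_)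
    exact_mod_cast (N + 1).lt_succ_self
  have hQ1 : Q.eval 1 ∈ I := by
    simpa [hQ] using I.mul_mem_right _ he
  have hQ'1 : IsUnit (Q.derivative.eval 1) := by
    refine isUnit_of_sub_mem (I := I) isUnit_one ?_
    simpa [hQ, add_sub_right_comm] using I.mul_mem_right _ he
  obtain ⟨z, hz, hz1⟩ := HenselianRing.is_henselian Q hQmonic 1 hQ1 (hQ'1.map _)
  obtain ⟨u, hu⟩ := (isUnit_of_sub_mem isUnit_one hz1).exists_right_inv
  let : Invertible u := ⟨z, hu, by rw [mul_comm, hu]⟩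
  have hrefl : (h.reflect N).eval z * u ^ N = h.eval u :=
    eval₂_reflect_mul_pow (RingHom.id R) u N h le_rfl
  have hroot : 1 - u + e * u ^ 2 * h.eval u = 0 := by
    have hz : z ^ (N + 2) - z ^ (N + 1) + e * (h.reflect N).eval z = 0 := by
      simpa [hQ] using hz
    have hzu (i : ℕ) : z ^ i * u ^ i = 1 := by rw [← mul_pow, hu, one_pow]
    linear_combination u ^ (N + 2) * hz - e * u ^ 2 * hrefl - hzu (N + 2) + u * hzu (N + 1)
  have hhu : h.eval u = g.eval (-e * u) := by simp [hh]
  refine ⟨-e * u, I.mul_mem_right _ (I.neg_mem he), ?_⟩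
  linear_combination e * hroot - e ^ 2 * u ^ 2 * hhu

theorem exists_isRoot_of_eval_eq_sq_mul (f : R[X]) (a : R) {e : R} (he : e ∈ I)
    (hf : f.eval a = f.derivative.eval a ^ 2 * e) :
    ∃ y ∈ I, f.IsRoot (a + f.derivative.eval a * y) := by
  set d := f.derivative.eval a
  set g := (taylor a f).divX.divX
  have hexpand (t : R) : f.eval (a + t) = f.eval a + d * t + t ^ 2 * g.eval t := by
    have h : taylor a f = g * X ^ 2 + C d * X + C (f.eval a) := by
      conv_lhs => rw [← divX_mul_X_add (taylor a f), ← divX_mul_X_add (taylor a f).divX]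
      simp only [coeff_divX, zero_add, taylor_coeff_zero, taylor_coeff_one]
      ring
    rw [add_comm a, ← taylor_eval, h]
    simp only [eval_add, eval_mul, eval_pow, eval_C, eval_X]
    ring
  obtain ⟨y, hy, hy0⟩ := exists_mem_add_add_sq_mul_eval_eq_zero he (g.comp (C d * X))
  refine ⟨y, hy, ?_⟩
  have hy0 : e + y + y ^ 2 * g.eval (d * y) = 0 := by simpa using hy0
  rw [IsRoot.def, hexpand]
  linear_combination d ^ 2 * hy0 + hf

end Hensel

theorem exists_isRoot_four_dvd_sub {R : Type*} [CommRing R]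
    [HenselianRing R (Ideal.span {(2 : R)})] {n : ℕ} (hn : Odd n) {f : R[X]}
    (hf : 8 ∣ f - (X ^ (2 * n) - 1)) {a : R} (ha : a ^ (2 * n) = 1) :
    ∃ r, f.IsRoot r ∧ 4 ∣ r - a := by
  obtain ⟨k, rfl⟩ := hn
  obtain ⟨g, hg⟩ := hf
  have hf : f = X ^ (2 * (2 * k + 1)) - 1 + C 8 * g := by
    rw [map_ofNat]
    linear_combination hg
  have hfa : f.eval a = 8 * g.eval a := by simp [hf, ha]
  set u := (2 * k + 1) * a ^ (4 * k + 1) + 4 * g.derivative.eval a with hu_def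
  have hf'a : f.derivative.eval a = 2 * u := by
    simp only [hf, derivative_add, derivative_sub, derivative_X_pow, derivative_one,
      derivative_C_mul, eval_add, eval_sub, eval_mul, eval_pow, eval_C, eval_X, eval_zero]
    rw [show 2 * (2 * k + 1) - 1 = 4 * k + 1 by lia]
    push_cast
    ring
  have hu : IsUnit u := by
    have ha_unit : IsUnit a := IsUnit.of_pow_eq_one ha (by lia)
    refine isUnit_of_sub_mem (I := Ideal.span {(2 : R)}) (ha_unit.pow (4 * k + 1)) ?_
    rw [Ideal.mem_span_singleton]
    exact ⟨k * a ^ (4 * k + 1) + 2 * g.derivative.eval a, by rw [hu_def]; ring⟩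
  obtain ⟨v, hv⟩ := hu.exists_right_inv
  have hfa_sq : f.eval a = f.derivative.eval a ^ 2 * (2 * (v ^ 2 * g.eval a)) := by
    rw [hfa, hf'a]
    linear_combination -8 * g.eval a * (u * v + 1) * hv
  obtain ⟨y, hy, hroot⟩ := exists_isRoot_of_eval_eq_sq_mul f a
    (Ideal.mul_mem_right _ _ (Ideal.mem_span_singleton_self 2)) hfa_sq
  obtain ⟨c, rfl⟩ := Ideal.mem_span_singleton.mp hy
  refine ⟨_, hroot, u * c, ?_⟩
  rw [hf'a]
  ring

lemma two_dvd_add_one_of_four_dvd_sq_sub_one {A : Type*} [CommRing A] [IsDomain A] [CharZero A]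
    [IsIntegrallyClosed A] {x : A} (hx : 4 ∣ x ^ 2 - 1) : 2 ∣ x + 1 := by
  obtain ⟨c, hc⟩ := hx
  set L := FractionRing A
  have hc' : algebraMap A L x ^ 2 - 1 = 4 * algebraMap A L c := by
    simpa only [map_sub, map_mul, map_pow, map_one, map_ofNat] using congrArg (algebraMap A L) hc
  have : CharZero L := charZero_of_injective_algebraMap (FaithfulSMul.algebraMap_injective A L)
  have hint : IsIntegral A ((algebraMap A L x + 1) / 2) := by
    refine ⟨X ^ 2 - X - C c, by monicity!, ?_⟩
    simp only [eval₂_sub, eval₂_pow, eval₂_X, eval₂_C]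
    linear_combination hc' / 4
  obtain ⟨θ, hθ⟩ := IsIntegrallyClosed.isIntegral_iff.mp hint
  refine ⟨θ, FaithfulSMul.algebraMap_injective A L ?_⟩
  simp only [map_add, map_mul, map_one, map_ofNat, hθ]
  ring

lemma charZero_wittVector (p : ℕ) [Fact p.Prime] (k : Type*) [Field k] [CharP k p]
    [PerfectRing k p] : CharZero (WittVector p k) := by
  obtain ⟨q, hq⟩ := CharP.exists (WittVector p k)
  rcases CharP.char_is_prime_or_zero (WittVector p k) q with hqp | rfl
  · have hpq : p ∣ q := by
      rw [← CharP.cast_eq_zero_iff k, ← map_natCast (WittVector.constantCoeff (p := p) (R := k)),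
        CharP.cast_eq_zero, map_zero]
    rw [← (Nat.prime_dvd_prime_iff_eq Fact.out hqp).mp hpq] at hq
    exact absurd (CharP.cast_eq_zero _ p) (WittVector.p_nonzero p k)
  · exact CharP.charP_to_charZero _

lemma exists_ringHom_algebraMap_comp_eq {A R : Type*} (L : Type*) [CommRing A] [CommRing R]
    [Field L] [Algebra R L] [IsFractionRing R L] [IsIntegrallyClosed R]
    [Algebra.IsIntegral ℤ A] (φ : A →+* L) : ∃ ψ : A →+* R, (algebraMap R L).comp ψ = φ := by
  have hinj : Function.Injective (algebraMap R L) := IsFractionRing.injective R L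
  have hrange (x : A) : φ x ∈ (algebraMap R L).range := by
    have hint : IsIntegral ℤ (φ x) := (Algebra.IsIntegral.isIntegral x).map φ.toIntAlgHom
    exact IsIntegrallyClosed.isIntegral_iff.mp (hint.tower_top (A := R))
  let e := RingEquiv.ofBijective (algebraMap R L).rangeRestrict
    ⟨fun _ _ h ↦ hinj (congrArg Subtype.val h), RingHom.rangeRestrict_surjective _⟩
  refine ⟨e.symm.toRingHom.comp (φ.codRestrict _ hrange), RingHom.ext fun x ↦ ?_⟩
  exact congrArg Subtype.val (e.apply_symm_apply _)

lemma exists_ringHom_apply_eq_of_aeval_eq_zero {K L : Type*} [Field K] [CharZero K] [Field L]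
    [CharZero L] {α : K} {F : ℤ[X]} (hmon : F.Monic) (hirr : Irreducible F)
    (hroot : aeval α F = 0) (hgen : Algebra.adjoin ℚ {α} = ⊤) {x : L} (hx : aeval x F = 0) :
    ∃ φ : K →+* L, φ α = x := by
  have hrootQ : aeval α (F.map (algebraMap ℤ ℚ)) = 0 := by rwa [aeval_map_algebraMap]
  have hmin : F.map (algebraMap ℤ ℚ) = minpoly ℚ α :=
    minpoly.eq_of_irreducible_of_monic
      ((hmon.irreducible_iff_irreducible_map_fraction_map (K := ℚ)).mp hirr) hrootQ (hmon.map _)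
  let pb := PowerBasis.ofAdjoinEqTop ⟨_, hmon.map _, hrootQ⟩ hgen
  have hx' : aeval x (minpoly ℚ pb.gen) = 0 := by
    have hpb : pb.gen = α := PowerBasis.ofAdjoinEqTop_gen _ hgen
    rwa [hpb, ← hmin, aeval_map_algebraMap]
  exact ⟨pb.lift x hx', pb.lift_gen x hx'⟩

lemma exists_ringHom_ringOfIntegers_apply_eq {K R : Type*} (L : Type*) [Field K] [CharZero K]
    [CommRing R] [CharZero R] [IsIntegrallyClosed R] [Field L] [Algebra R L] [IsFractionRing R L]
    {α : 𝓞 K} {F : ℤ[X]} (hmon : F.Monic) (hirr : Irreducible F) (hroot : aeval (α : K) F = 0)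
    (hgen : Algebra.adjoin ℚ {(α : K)} = ⊤) {r : R} (hr : aeval r F = 0) :
    ∃ ψ : 𝓞 K →+* R, ψ α = r := by
  have hinj : Function.Injective (algebraMap R L) := IsFractionRing.injective R L
  have : CharZero L := charZero_of_injective_algebraMap hinj
  have hrL : aeval (algebraMap R L r) F = 0 := by rw [aeval_algebraMap_apply, hr, map_zero]
  obtain ⟨φ, hφ⟩ := exists_ringHom_apply_eq_of_aeval_eq_zero hmon hirr hroot hgen hrL
  obtain ⟨ψ, hψ⟩ := exists_ringHom_algebraMap_comp_eq (R := R) L (φ.comp (algebraMap (𝓞 K) K))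
  exact ⟨ψ, hinj ((RingHom.congr_fun hψ α).trans hφ)⟩

lemma two_dvd_pow_add_one {A : Type*} [CommRing A] [IsDomain A] [CharZero A] [IsIntegrallyClosed A]
    {F : ℤ[X]} {n : ℕ} (hF : 8 ∣ F - (X ^ (2 * n) - 1)) {α : A} (hα : aeval α F = 0) :
    2 ∣ α ^ n + 1 := by
  obtain ⟨G, hG⟩ := hF
  have h := congrArg (aeval α) hG
  simp only [map_sub, map_mul, map_pow, map_one, map_ofNat, aeval_X, hα] at h
  refine two_dvd_add_one_of_four_dvd_sq_sub_one ⟨-2 * aeval α G, ?_⟩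
  linear_combination -h

lemma surjective_of_forall_mem_powers {A k : Type*} [Semiring A] [DivisionRing k] {u : kˣ}
    (hu : ∀ x, x ∈ Submonoid.powers u) (φ : A →+* k) {a : A} (ha : φ a = u) :
    Function.Surjective φ := by
  intro x
  rcases eq_or_ne x 0 with rfl | hx
  · exact ⟨0, map_zero φ⟩
  · obtain ⟨i, hi⟩ := hu (Units.mk0 x hx)
    exact ⟨a ^ i, by simpa [ha] using congrArg Units.val hi⟩

lemma isMaximal_ker_and_mem_and_card_quotient {A k : Type*} [CommRing A] [Field k] (p : ℕ)
    [CharP k p] (φ : A →+* k) (hφ : Function.Surjective φ) :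
    (RingHom.ker φ).IsMaximal ∧ (p : A) ∈ RingHom.ker φ ∧
      Nat.card (A ⧸ RingHom.ker φ) = Nat.card k :=
  ⟨RingHom.ker_isMaximal_of_surjective φ hφ,
    by rw [RingHom.mem_ker, map_natCast, CharP.cast_eq_zero],
    Nat.card_congr (RingHom.quotientKerEquivOfSurjective hφ).toEquiv⟩

section NumberField

variable {K : Type*} [Field K] {α : 𝓞 K} {F : ℤ[X]} {n : ℕ}

lemma exists_ringHom_wittVector_four_dvd_sub [CharZero K] (hmon : F.Monic)
    (hirr : Irreducible F) (hroot : aeval (α : K) F = 0)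
    (hgen : Algebra.adjoin ℚ {(α : K)} = ⊤) (hn : Odd n) (hF : 8 ∣ F - (X ^ (2 * n) - 1))
    {k : Type*} [Field k] [CharP k 2] [PerfectRing k 2]
    {a : WittVector 2 k} (ha : a ^ (2 * n) = 1) :
    ∃ ψ : 𝓞 K →+* WittVector 2 k, 4 ∣ ψ α - a := by
  have := charZero_wittVector 2 k
  have : IsAdicComplete (Ideal.span {(2 : WittVector 2 k)}) (WittVector 2 k) :=
    WittVector.isAdicCompleteIdealSpanP
  have hF' : 8 ∣ F.map (algebraMap ℤ (WittVector 2 k)) - (X ^ (2 * n) - 1) := by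
    simpa using map_dvd (mapRingHom (algebraMap ℤ (WittVector 2 k))) hF
  obtain ⟨r, hr, hra⟩ := exists_isRoot_four_dvd_sub hn hF' ha
  rw [IsRoot.def, eval_map_algebraMap] at hr
  obtain ⟨ψ, rfl⟩ := exists_ringHom_ringOfIntegers_apply_eq (FractionRing (WittVector 2 k))
    hmon hirr hroot hgen hr
  exact ⟨ψ, hra⟩

lemma exists_ringHom_apply_eq_constantCoeff [CharZero K] (hmon : F.Monic)
    (hirr : Irreducible F) (hroot : aeval (α : K) F = 0)
    (hgen : Algebra.adjoin ℚ {(α : K)} = ⊤) (hn : Odd n) (hF : 8 ∣ F - (X ^ (2 * n) - 1))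
    {k : Type*} [Field k] [CharP k 2] [PerfectRing k 2]
    {a b : WittVector 2 k} (ha : a ^ (2 * n) = 1) (hab : a ^ n + 1 = 2 * b)
    {θ : 𝓞 K} (hθ : α ^ n + 1 = 2 * θ) :
    ∃ φ : 𝓞 K →+* k, φ α = WittVector.constantCoeff a ∧ φ θ = WittVector.constantCoeff b := by
  have := charZero_wittVector 2 k
  obtain ⟨ψ, hψ⟩ := exists_ringHom_wittVector_four_dvd_sub hmon hirr hroot hgen hn hF ha
  have hψθ : ψ α ^ n + 1 = 2 * ψ θ := by
    simpa only [map_add, map_mul, map_pow, map_one, map_ofNat] using congrArg ψ hθ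
  have hθb : 2 ∣ ψ θ - b := by
    refine (mul_dvd_mul_iff_left (two_ne_zero (α := WittVector 2 k))).mp ?_
    convert hψ.trans (sub_dvd_pow_sub_pow (ψ α) a n) using 1
    · norm_num
    · linear_combination hab - hψθ
  have residue_eq {x y : WittVector 2 k} (h : 2 ∣ x - y) :
      WittVector.constantCoeff x = WittVector.constantCoeff y := by
    have := map_dvd WittVector.constantCoeff h
    rwa [map_ofNat, CharTwo.two_eq_zero, zero_dvd_iff, map_sub, sub_eq_zero] at this
  refine ⟨WittVector.constantCoeff.comp ψ, residue_eq (dvd_trans ?_ hψ), residue_eq hθb⟩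
  exact ⟨2, by norm_num⟩

lemma exists_surjective_ringHom_ker_ne [NumberField K] (hmon : F.Monic)
    (hirr : Irreducible F) (hroot : aeval (α : K) F = 0)
    (hgen : Algebra.adjoin ℚ {(α : K)} = ⊤) (hn : Odd n) (hF : 8 ∣ F - (X ^ (2 * n) - 1))
    {k : Type*} [Field k] [Finite k] [CharP k 2] (hk : Nat.card kˣ ∣ n) :
    ∃ φ χ : 𝓞 K →+* k, Function.Surjective φ ∧ Function.Surjective χ ∧
      RingHom.ker φ ≠ RingHom.ker χ := by
  have hα : aeval α F = 0 := by
    rwa [← FaithfulSMul.algebraMap_eq_zero_iff (𝓞 K) K, ← aeval_algebraMap_apply]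
  obtain ⟨θ, hθ⟩ := two_dvd_pow_add_one hF hα
  obtain ⟨ζ, hζ⟩ := IsCyclic.exists_monoid_generator (α := kˣ)
  have hζn : (ζ : k) ^ n = 1 := by
    rw [← Units.val_pow_eq_pow_val, Units.val_eq_one]
    exact orderOf_dvd_iff_pow_eq_one.mp ((orderOf_dvd_natCard ζ).trans hk)
  set τ := WittVector.teichmuller 2 (ζ : k)
  have hτ : τ ^ n = 1 := by rw [← map_pow, hζn, map_one]
  have hτ_sq : τ ^ (2 * n) = 1 := by rw [mul_comm, pow_mul, hτ, one_pow]
  have hτζ : WittVector.constantCoeff τ = (ζ : k) := WittVector.teichmuller_coeff_zero 2 _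
  obtain ⟨φ, hφα, hφθ⟩ := exists_ringHom_apply_eq_constantCoeff hmon hirr hroot hgen hn hF
    (a := τ) (b := 1) hτ_sq (by rw [hτ]; norm_num) hθ
  obtain ⟨χ, hχα, hχθ⟩ := exists_ringHom_apply_eq_constantCoeff hmon hirr hroot hgen hn hF
    (a := -τ) (b := 0) (by rw [(even_two_mul n).neg_pow, hτ_sq]) (by rw [hn.neg_pow, hτ]; ring) hθ
  rw [map_neg, CharTwo.neg_eq] at hχα
  refine ⟨φ, χ, surjective_of_forall_mem_powers hζ φ (hφα.trans hτζ),
    surjective_of_forall_mem_powers hζ χ (hχα.trans hτζ), fun hker ↦ ?_⟩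
  have hθφ : θ ∈ RingHom.ker φ := by rw [hker, RingHom.mem_ker, hχθ, map_zero]
  rw [RingHom.mem_ker, hφθ, map_one] at hθφ
  exact one_ne_zero hθφ

theorem primes_above_two_of_x6_72xm_71_general [NumberField K] (hmon : F.Monic)
    (hirr : Irreducible F) (hroot : aeval (α : K) F = 0)
    (hgen : Algebra.adjoin ℚ {(α : K)} = ⊤) (hn : Odd n) (hF : 8 ∣ F - (X ^ (2 * n) - 1))
    {d : ℕ} (hd : 2 ^ d - 1 ∣ n) :
    ∃ P Q : Ideal (𝓞 K), P ≠ Q ∧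
      P.IsMaximal ∧ (2 : 𝓞 K) ∈ P ∧ Nat.card (𝓞 K ⧸ P) = 2 ^ d ∧
      Q.IsMaximal ∧ (2 : 𝓞 K) ∈ Q ∧ Nat.card (𝓞 K ⧸ Q) = 2 ^ d := by
  have hd0 : d ≠ 0 := by
    rintro rfl
    exact hn.pos.ne' (by simpa using hd)
  have hcard : Nat.card (GaloisField 2 d) = 2 ^ d := GaloisField.card 2 d hd0
  have hunits : Nat.card (GaloisField 2 d)ˣ ∣ n := by rwa [Nat.card_units, hcard]
  obtain ⟨φ, χ, hφ, hχ, hne⟩ := exists_surjective_ringHom_ker_ne hmon hirr hroot hgen hn hF hunits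
  obtain ⟨hP, h2P, hcardP⟩ := isMaximal_ker_and_mem_and_card_quotient 2 φ hφ
  obtain ⟨hQ, h2Q, hcardQ⟩ := isMaximal_ker_and_mem_and_card_quotient 2 χ hχ
  exact ⟨_, _, hne, hP, h2P, hcardP.trans hcard, hQ, h2Q, hcardQ.trans hcard⟩

end NumberField

/-- For `K` defined by a root of `x^6 + 72 x^m + 71`, above `2` the ring `ℤ_K`
has at least two distinct primes of residue degree `1` and at least two distinct
primes of residue degree `2`. -/
theorem primes_above_two_of_x6_72xm_71
    {K : Type*} [Field K] [NumberField K] (α : 𝓞 K)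
    (m : ℕ) (hm : 1 ≤ m) (hm5 : m ≤ 5)
    (F : ℤ[X]) (hF : F = X ^ 6 + C 72 * X ^ m + C 71)
    (hirr : Irreducible F)
    (hroot : Polynomial.aeval (α : K) F = 0)
    (hgen : Algebra.adjoin ℚ {(α : K)} = ⊤) :
    (∃ P Q : Ideal (𝓞 K), P ≠ Q ∧
      P.IsMaximal ∧ (2 : 𝓞 K) ∈ P ∧ Nat.card (𝓞 K ⧸ P) = 2 ∧
      Q.IsMaximal ∧ (2 : 𝓞 K) ∈ Q ∧ Nat.card (𝓞 K ⧸ Q) = 2) ∧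
    (∃ P Q : Ideal (𝓞 K), P ≠ Q ∧
      P.IsMaximal ∧ (2 : 𝓞 K) ∈ P ∧ Nat.card (𝓞 K ⧸ P) = 2 ^ 2 ∧
      Q.IsMaximal ∧ (2 : 𝓞 K) ∈ Q ∧ Nat.card (𝓞 K ⧸ Q) = 2 ^ 2) := by
  have hmon : F.Monic := by
    rw [hF]
    interval_cases m <;> monicity!
  have h8 : 8 ∣ F - (X ^ (2 * 3) - 1) :=
    ⟨9 * X ^ m + 9, by rw [hF, map_ofNat, map_ofNat]; ring⟩
  exact ⟨primes_above_two_of_x6_72xm_71_general hmon hirr hroot hgen (by decide) h8 (d := 1)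
      (by norm_num),
    primes_above_two_of_x6_72xm_71_general hmon hirr hroot hgen (by decide) h8 (d := 2)
      (by norm_num)⟩
end
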